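/- arXiv:1912.07629 — 5 statements merged into one kernel-verified Lean document; each statement's English description precedes it below -/
import Mathlib

section
/- Let σ* > 0, let τ > σ*, and let p be an even nonnegative integer. Then for every σ with 0 < σ < σ*, we have ∫_{|x|>τ} N(0,σ²;x)·x^p dx < ∫_{|x|>τ} N(0,(σ*)²;x)·x^p dx; that is, the truncated p-th moment over the tail region {|x| > τ} is strictly increasing in the standard deviation on (0, σ*]. -/
open MeasureTheory

/-- The univariate Gaussian density `N(0, σ²; x) = (1/(√(2π)·σ))·exp(−x²/(2σ²))`. -/
noncomputable def gpdf (σ x : ℝ) : ℝ :=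
  (Real.sqrt (2 * Real.pi) * σ)⁻¹ * Real.exp (-(x ^ 2) / (2 * σ ^ 2))

/-! The substitution `x = σ z` turns the tail moment of order `r` of `N(0, σ²)` beyond `τ` into
`σ ^ r * ∫_{|z| > τ / σ} N(0, 1; z) |z| ^ r dz`. As `σ` grows the factor `σ ^ r` does not decrease,
while the threshold `τ / σ` drops, so the domain of integration of a positive function strictly
grows. Comparing the densities pointwise would only work for `σ ≤ |x|`, beyond which `N(0, σ²; x)`
decreases in `σ`. -/

open Set Real
open scoped Pointwise

theorem setIntegral_lt_setIntegral_of_subset {α : Type*} [MeasurableSpace α] {μ : Measure α}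
    {f : α → ℝ} {s t : Set α} (hs : MeasurableSet s) (ht : MeasurableSet t) (hst : s ⊆ t)
    (hf : IntegrableOn f t μ) (hpos : ∀ x ∈ t \ s, 0 < f x) (hμ : μ (t \ s) ≠ 0) :
    ∫ x in s, f x ∂μ < ∫ x in t, f x ∂μ := by
  have hnonneg : 0 ≤ᵐ[μ.restrict (t \ s)] f :=
    ae_restrict_of_forall_mem (ht.diff hs) fun x hx => (hpos x hx).le
  have hsupp : Function.support f ∩ (t \ s) = t \ s :=
    inter_eq_right.2 fun x hx => (hpos x hx).ne'
  have hdiff : 0 < ∫ x in t \ s, f x ∂μ := by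
    rwa [setIntegral_pos_iff_support_of_nonneg_ae hnonneg (hf.mono_set sdiff_subset), hsupp,
      pos_iff_ne_zero]
  rwa [setIntegral_sdiff hs hf hst, sub_pos] at hdiff

/-- The absolute moment of real order `r` of the density `f`, truncated to the two-sided tail
`{|x| > τ}`. Taking `|x| ^ r` rather than `x ^ r` keeps the integrand meaningful for `x < 0`. -/
noncomputable def tailMoment (f : ℝ → ℝ) (r τ : ℝ) : ℝ :=
  ∫ x in {x : ℝ | τ < |x|}, f x * |x| ^ r

section TailMoment

variable {f : ℝ → ℝ} {r τ σ : ℝ}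

theorem smul_setOf_lt_abs (hσ : 0 < σ) (τ : ℝ) :
    σ • {x : ℝ | τ < |x|} = {x : ℝ | σ * τ < |x|} := by
  ext x
  rw [mem_smul_set_iff_inv_smul_mem₀ hσ.ne', mem_ofPred_eq, mem_ofPred_eq, smul_eq_mul, abs_mul,
    abs_of_pos (inv_pos.2 hσ), lt_inv_mul_iff₀ hσ]

theorem measurableSet_lt_abs (τ : ℝ) : MeasurableSet {x : ℝ | τ < |x|} :=
  measurableSet_lt measurable_const measurable_id.abs

theorem tailMoment_scale (hσ : 0 < σ) (f : ℝ → ℝ) (r τ : ℝ) :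
    tailMoment (fun x => σ⁻¹ * f (x / σ)) r τ = σ ^ r * tailMoment f r (τ / σ) := by
  have hintegrand (x : ℝ) :
      σ⁻¹ * f (x / σ) * |x| ^ r = σ⁻¹ * σ ^ r * (f (σ⁻¹ • x) * |σ⁻¹ • x| ^ r) := by
    have habs : |x| ^ r = σ ^ r * |x / σ| ^ r := by
      rw [← mul_rpow hσ.le (abs_nonneg _), abs_div, abs_of_pos hσ, mul_div_cancel₀ _ hσ.ne']
    rw [habs, smul_eq_mul, inv_mul_eq_div σ x]
    ring
  have htail : σ⁻¹ • {x : ℝ | τ < |x|} = {x : ℝ | τ / σ < |x|} := by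
    rw [smul_setOf_lt_abs (inv_pos.2 hσ), inv_mul_eq_div]
  simp only [tailMoment, hintegrand]
  rw [integral_const_mul,
    Measure.setIntegral_comp_smul_of_pos volume (fun z => f z * |z| ^ r) _ (inv_pos.2 hσ), htail,
    Module.finrank_self, pow_one, inv_inv, smul_eq_mul]
  field_simp

theorem tailMoment_strictAntiOn (hf : ∀ x, 0 < f x) (hint : Integrable fun x => f x * |x| ^ r) :
    StrictAntiOn (tailMoment f r) (Ici 0) := by
  intro a ha b _ hab
  refine setIntegral_lt_setIntegral_of_subset (measurableSet_lt_abs b) (measurableSet_lt_abs a)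
    (fun x hx => hab.trans hx) hint.integrableOn
    (fun x hx => mul_pos (hf x) (rpow_pos_of_pos (ha.trans_lt hx.1) r)) ?_
  have hsub : Ioo a b ⊆ {x : ℝ | a < |x|} \ {x | b < |x|} := fun x hx =>
    ⟨hx.1.trans_le (le_abs_self x), by simpa [abs_of_pos (ha.trans_lt hx.1)] using hx.2.le⟩
  exact ((isOpen_Ioo.measure_pos volume (nonempty_Ioo.2 hab)).trans_le (measure_mono hsub)).ne'

theorem tailMoment_nonneg (hf : ∀ x, 0 ≤ f x) (r τ : ℝ) : 0 ≤ tailMoment f r τ :=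
  integral_nonneg fun x => mul_nonneg (hf x) (rpow_nonneg (abs_nonneg x) r)

theorem tailMoment_scale_strictMonoOn (hf : ∀ x, 0 < f x)
    (hint : Integrable fun x => f x * |x| ^ r) (hr : 0 ≤ r) (hτ : 0 < τ) :
    StrictMonoOn (fun σ => tailMoment (fun x => σ⁻¹ * f (x / σ)) r τ) (Ioi 0) := by
  intro σ hσ σ' hσ' hlt
  have hσ : 0 < σ := hσ
  have hσ' : 0 < σ' := hσ'
  have hthreshold : τ / σ' < τ / σ := div_lt_div_of_pos_left hτ hσ hlt
  calc tailMoment (fun x => σ⁻¹ * f (x / σ)) r τ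
      = σ ^ r * tailMoment f r (τ / σ) := tailMoment_scale hσ f r τ
    _ ≤ σ' ^ r * tailMoment f r (τ / σ) := by
      gcongr
      exact tailMoment_nonneg (fun x => (hf x).le) r _
    _ < σ' ^ r * tailMoment f r (τ / σ') := by
      gcongr
      exact tailMoment_strictAntiOn hf hint (div_pos hτ hσ').le (div_pos hτ hσ).le hthreshold
    _ = tailMoment (fun x => σ'⁻¹ * f (x / σ')) r τ := (tailMoment_scale hσ' f r τ).symm

end TailMoment

theorem gpdf_pos {σ : ℝ} (hσ : 0 < σ) (x : ℝ) : 0 < gpdf σ x := by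
  unfold gpdf
  positivity

theorem gpdf_eq_inv_mul_gpdf_one_div (σ x : ℝ) : gpdf σ x = σ⁻¹ * gpdf 1 (x / σ) := by
  have hexp : -x ^ 2 / (2 * σ ^ 2) = -(x / σ) ^ 2 / (2 * 1 ^ 2) := by ring
  rw [gpdf, gpdf, hexp]
  ring

theorem integrable_abs_rpow_mul_exp_neg_mul_sq {b r : ℝ} (hb : 0 < b) (hr : -1 < r) :
    Integrable fun x : ℝ => |x| ^ r * exp (-b * x ^ 2) := by
  have hradial : IntegrableOn (fun y : ℝ => y ^ (Module.finrank ℝ ℝ - 1) •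
      (y ^ r * exp (-b * y ^ 2))) (Ioi 0) := by
    simpa only [Module.finrank_self, tsub_self, pow_zero, one_smul] using
      integrableOn_rpow_mul_exp_neg_mul_sq hb hr
  simpa only [norm_eq_abs, sq_abs] using (integrable_fun_norm_addHaar volume).2 hradial

theorem integrable_gpdf_mul_abs_rpow {σ r : ℝ} (hσ : σ ≠ 0) (hr : -1 < r) :
    Integrable fun x => gpdf σ x * |x| ^ r := by
  have hb : 0 < (2 * σ ^ 2)⁻¹ := by positivity
  convert (integrable_abs_rpow_mul_exp_neg_mul_sq hb hr).const_mul (√(2 * π) * σ)⁻¹ using 2 with x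
  rw [gpdf, show -x ^ 2 / (2 * σ ^ 2) = -(2 * σ ^ 2)⁻¹ * x ^ 2 by ring]
  ring

theorem stmt0_general {τ r : ℝ} (hτ : 0 < τ) (hr : 0 ≤ r) :
    StrictMonoOn (fun σ => ∫ x in {x : ℝ | τ < |x|}, gpdf σ x * |x| ^ r) (Ioi 0) := by
  have hint : Integrable fun x => gpdf 1 x * |x| ^ r :=
    integrable_gpdf_mul_abs_rpow one_ne_zero (by linarith)
  simpa only [tailMoment, ← gpdf_eq_inv_mul_gpdf_one_div] using
    tailMoment_scale_strictMonoOn (gpdf_pos one_pos) hint hr hτ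

/-- The truncated p-th moment over the tail `{|x| > τ}` is strictly increasing in the
standard deviation on `(0, σ*]`. -/
theorem stmt0 (σstar τ : ℝ) (hσstar : 0 < σstar) (hτ : σstar < τ)
    (p : ℕ) (hp : Even p) (σ : ℝ) (hσ0 : 0 < σ) (hσ : σ < σstar) :
    (∫ x in {x : ℝ | τ < |x|}, gpdf σ x * x ^ p) <
      ∫ x in {x : ℝ | τ < |x|}, gpdf σstar x * x ^ p := by
  simpa only [rpow_natCast, hp.pow_abs] using
    stmt0_general (hσstar.trans hτ) p.cast_nonneg hσ0 hσstar hσ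
end

section
/- There is a universal constant c' > 0 such that the following holds. Let F be a mixture of k univariate zero-mean Gaussians with maximum standard deviation σ_max, let p be an even positive integer, let N be a positive integer, and let Z₁,…,Z_N be i.i.d. samples from F. Define the random variable X := (1/N)·∑_{i=1}^N Z_i^p − E_{Z∼F}[Z^p]. Then for every integer t ≥ 2, E[|X|^t] ≤ ( (c'/√N)·σ_max^p·p^{p/2}·t^{p/2+1} )^t. -/
open MeasureTheory ProbabilityTheory

/-- The mixture of `k` univariate zero-mean Gaussians with mixing weights `pw` and
standard deviations `σ`. -/
noncomputable def gaussMixture (k : ℕ) (pw σ : Fin k → ℝ) : Measure ℝ :=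
  ∑ i, ENNReal.ofReal (pw i) • gaussianReal 0 ⟨σ i ^ 2, sq_nonneg (σ i)⟩

/-! Only the sub-Gaussian tails of the samples matter. Subtracting an independent copy makes the
centred summands symmetric, and a sum of independent symmetric variables `Dᵢ` keeps its law when the
`Dᵢ` are multiplied by random signs. Given the `Dᵢ`, the signed sum is sub-Gaussian with proxy
`∑ Dᵢ²` by Hoeffding's lemma, so its `r`-th absolute moment is at most `(r ∑ Dᵢ²)^(r/2)`
(Khintchine's inequality). Power means turn this into a Marcinkiewicz–Zygmund inequality, which
bounds the `L^t` norm of the error of an empirical mean of `f` by `2 √(t/N)` times the `L^t` norm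
of `f`. For `f = x^p` that norm is at most `(s² p t)^(p/2)` when the samples have proxy `s²`, as
mixtures of centred Gaussians with standard deviations at most `s` do. -/

open scoped NNReal ENNReal

section SubGaussian

lemma rpow_le_rpow_self_mul_exp_sub {x r : ℝ} (hx : 0 ≤ x) (hr : 0 < r) :
    x ^ r ≤ r ^ r * Real.exp (x - r) := by
  have hxr : x / r ≤ Real.exp (x / r - 1) := by linarith [Real.add_one_le_exp (x / r - 1)]
  calc x ^ r = r ^ r * (x / r) ^ r := by
        rw [Real.div_rpow hx hr.le, mul_div_cancel₀ _ (Real.rpow_pos_of_pos hr r).ne']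
    _ ≤ r ^ r * Real.exp (x / r - 1) ^ r := by gcongr
    _ = r ^ r * Real.exp (x - r) := by
        rw [← Real.exp_mul, sub_mul, one_mul, div_mul_cancel₀ _ hr.ne']

variable {Ω : Type*} [MeasurableSpace Ω] {μ : Measure Ω} {X : Ω → ℝ} {c : ℝ≥0}

lemma integral_exp_mul_abs_le_of_hasSubgaussianMGF (hX : HasSubgaussianMGF X c μ) (l : ℝ) :
    ∫ ω, Real.exp (l * |X ω|) ∂μ ≤ 2 * Real.exp (c * l ^ 2 / 2) := by
  have hexp (u : ℝ) : Real.exp (l * |u|) ≤ Real.exp (l * u) + Real.exp (-l * u) := by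
    rcases abs_choice u with h | h <;> rw [h]
    · exact le_add_of_nonneg_right (Real.exp_pos _).le
    · rw [mul_neg, ← neg_mul]
      exact le_add_of_nonneg_left (Real.exp_pos _).le
  calc ∫ ω, Real.exp (l * |X ω|) ∂μ
      ≤ ∫ ω, (Real.exp (l * X ω) + Real.exp (-l * X ω)) ∂μ :=
        integral_mono_of_nonneg (ae_of_all _ fun _ => (Real.exp_pos _).le)
          ((hX.integrable_exp_mul l).add (hX.integrable_exp_mul (-l)))
          (ae_of_all _ fun ω => hexp (X ω))
    _ = mgf X μ l + mgf X μ (-l) :=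
        integral_add (hX.integrable_exp_mul l) (hX.integrable_exp_mul (-l))
    _ ≤ Real.exp (c * l ^ 2 / 2) + Real.exp (c * (-l) ^ 2 / 2) :=
        add_le_add (hX.mgf_le l) (hX.mgf_le (-l))
    _ = 2 * Real.exp (c * l ^ 2 / 2) := by rw [neg_sq, two_mul]

theorem integral_abs_rpow_le_of_hasSubgaussianMGF (hX : HasSubgaussianMGF X c μ) {r : ℝ}
    (hr : 0 < r) :
    ∫ ω, |X ω| ^ r ∂μ ≤ 2 * Real.exp (-(r / 2)) * (c * r) ^ (r / 2) := by
  rcases eq_or_ne c 0 with rfl | hc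
  · have hzero : (fun ω => |X ω| ^ r) =ᵐ[μ] 0 := by
      filter_upwards [hX.ae_eq_zero_of_hasSubgaussianMGF_zero] with ω hω
      simp [hω, Real.zero_rpow hr.ne']
    rw [integral_eq_zero_of_ae hzero]
    positivity
  have : (0 : ℝ) < c := by positivity
  -- `l` minimises the bound `2 * (r / (e * l)) ^ r * exp (c * l ^ 2 / 2)`.
  set s := √(c * r) with hs
  set l := r / s with hl
  have hs_pos : 0 < s := by positivity
  have hs_sq : s ^ 2 = c * r := Real.sq_sqrt (by positivity)
  have hl_sq : c * l ^ 2 / 2 = r / 2 := by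
    rw [hl, div_pow, hs_sq]
    field_simp
  have hpointwise (u : ℝ) : |u| ^ r ≤ s ^ r * Real.exp (-r) * Real.exp (l * |u|) := by
    calc |u| ^ r = (s / r) ^ r * (l * |u|) ^ r := by
          rw [← Real.mul_rpow (by positivity) (by positivity)]
          congr 1
          rw [hl]
          field_simp
      _ ≤ (s / r) ^ r * (r ^ r * Real.exp (l * |u| - r)) := by
          gcongr
          exact rpow_le_rpow_self_mul_exp_sub (by positivity) hr
      _ = s ^ r * Real.exp (-r) * Real.exp (l * |u|) := by
          rw [← mul_assoc, ← Real.mul_rpow (by positivity) hr.le, div_mul_cancel₀ _ hr.ne',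
            sub_eq_neg_add, Real.exp_add, mul_assoc]
  calc ∫ ω, |X ω| ^ r ∂μ ≤ ∫ ω, s ^ r * Real.exp (-r) * Real.exp (l * |X ω|) ∂μ :=
        integral_mono_of_nonneg (ae_of_all _ fun _ => by positivity)
          ((integrable_exp_mul_abs (hX.integrable_exp_mul l)
            (hX.integrable_exp_mul (-l))).const_mul _)
          (ae_of_all _ fun ω => hpointwise (X ω))
    _ ≤ s ^ r * Real.exp (-r) * (2 * Real.exp (c * l ^ 2 / 2)) := by
        rw [integral_const_mul]
        gcongr
        exact integral_exp_mul_abs_le_of_hasSubgaussianMGF hX l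
    _ = 2 * Real.exp (-(r / 2)) * (c * r) ^ (r / 2) := by
        rw [hl_sq, Real.rpow_div_two_eq_sqrt _ (by positivity), ← hs,
          show -(r / 2) = -r + r / 2 by ring, Real.exp_add]
        ring

theorem integral_abs_rpow_le_of_hasSubgaussianMGF_of_two_le (hX : HasSubgaussianMGF X c μ)
    {r : ℝ} (hr : 2 ≤ r) :
    ∫ ω, |X ω| ^ r ∂μ ≤ (c * r) ^ (r / 2) := by
  have hconst : 2 * Real.exp (-(r / 2)) ≤ 1 := by
    rw [Real.exp_neg, ← div_eq_mul_inv, div_le_one (Real.exp_pos _)]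
    linarith [Real.add_one_le_exp (r / 2)]
  exact (integral_abs_rpow_le_of_hasSubgaussianMGF hX (by linarith)).trans
    (mul_le_of_le_one_left (by positivity) hconst)

lemma memLp_pow_of_hasSubgaussianMGF (hX : HasSubgaussianMGF X c μ) {p : ℕ} (hp : p ≠ 0)
    (t : ℝ≥0) : MemLp (fun ω => X ω ^ p) t μ := by
  have hexp : ((t * p : ℝ≥0) : ℝ≥0∞) / p = t := by
    rw [ENNReal.coe_mul, ENNReal.coe_natCast,
      ENNReal.mul_div_cancel_right (Nat.cast_ne_zero.2 hp) (ENNReal.natCast_ne_top p)]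
  have hnorm := (hX.memLp (t * p)).norm_rpow_div p
  rw [hexp] at hnorm
  rw [← memLp_norm_iff (hX.aemeasurable.pow_const p).aestronglyMeasurable]
  simpa using hnorm

lemma integral_abs_pow_rpow_le_of_hasSubgaussianMGF {s : ℝ≥0} (hX : HasSubgaussianMGF X (s ^ 2) μ)
    {p : ℕ} {t : ℝ} (hpt : 2 ≤ p * t) :
    ∫ ω, |X ω ^ p| ^ t ∂μ ≤ (s ^ p * (p * t) ^ ((p : ℝ) / 2)) ^ t := by
  calc ∫ ω, |X ω ^ p| ^ t ∂μ = ∫ ω, |X ω| ^ (p * t) ∂μ := by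
        simp only [abs_pow, Real.rpow_mul (abs_nonneg _), Real.rpow_natCast]
    _ ≤ ((s ^ 2 : ℝ≥0) * (p * t)) ^ (p * t / 2) :=
        integral_abs_rpow_le_of_hasSubgaussianMGF_of_two_le hX hpt
    _ = (s ^ p * (p * t) ^ ((p : ℝ) / 2)) ^ t := by
        rw [mul_div_right_comm, Real.rpow_mul (by positivity),
          Real.mul_rpow (by positivity) (by linarith), NNReal.coe_pow,
          Real.rpow_div_two_eq_sqrt _ (sq_nonneg _), Real.sqrt_sq s.coe_nonneg,
          Real.rpow_natCast]

lemma hasSubgaussianMGF_mono (hX : HasSubgaussianMGF X c μ) {d : ℝ≥0} (hcd : c ≤ d) :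
    HasSubgaussianMGF X d μ where
  integrable_exp_mul := hX.integrable_exp_mul
  mgf_le t := (hX.mgf_le t).trans (by gcongr)

lemma hasSubgaussianMGF_sum_smul_measure {ι : Type*} {s : Finset ι} {w : ι → ℝ≥0∞}
    {ν : ι → Measure Ω} (hw : ∑ i ∈ s, w i ≤ 1) (hX : ∀ i ∈ s, HasSubgaussianMGF X c (ν i)) :
    HasSubgaussianMGF X c (∑ i ∈ s, w i • ν i) := by
  have hw_top (i) (hi : i ∈ s) : w i ≠ ⊤ :=
    ne_top_of_le_ne_top ENNReal.one_ne_top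
      ((Finset.single_le_sum_of_canonicallyOrdered hi).trans hw)
  have hint (t : ℝ) (i) (hi : i ∈ s) :
      Integrable (fun ω => Real.exp (t * X ω)) (w i • ν i) :=
    ((hX i hi).integrable_exp_mul t).smul_measure (hw_top i hi)
  refine ⟨fun t => integrable_finsetSum_measure.2 (hint t), fun t => ?_⟩
  calc mgf X (∑ i ∈ s, w i • ν i) t = ∑ i ∈ s, (w i).toReal * mgf X (ν i) t := by
        simp only [mgf, integral_finsetSum_measure (hint t), integral_smul_measure, smul_eq_mul]
    _ ≤ ∑ i ∈ s, (w i).toReal * Real.exp (c * t ^ 2 / 2) := by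
        gcongr with i hi
        exact (hX i hi).mgf_le t
    _ ≤ 1 * Real.exp (c * t ^ 2 / 2) := by
        rw [← Finset.sum_mul, ← ENNReal.toReal_sum hw_top]
        gcongr
        exact ENNReal.toReal_le_of_le_ofReal zero_le_one (by simpa using hw)
    _ = Real.exp (c * t ^ 2 / 2) := one_mul _

end SubGaussian

section Independence

variable {Ω Ω' E F : Type*} [MeasurableSpace Ω] [MeasurableSpace Ω'] [MeasurableSpace E]
  [MeasurableSpace F] {P : Measure Ω} {P' : Measure Ω'}

lemma map_prodMk_fst_snd [IsProbabilityMeasure P] [IsProbabilityMeasure P'] {f : Ω → E}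
    {g : Ω' → F} (hf : AEMeasurable f P) (hg : AEMeasurable g P') :
    (P.prod P').map (fun q => (f q.1, g q.2)) = (P.map f).prod (P'.map g) := by
  rw [(indepFun_prod₀ hf hg).map_prod_eq_prod_map_map hf.comp_fst hg.comp_snd]
  congr 1
  · exact (HasLaw.comp ⟨hf, rfl⟩ measurePreserving_fst.hasLaw).map_eq
  · exact (HasLaw.comp ⟨hg, rfl⟩ measurePreserving_snd.hasLaw).map_eq

lemma iIndepFun_prodMk {ι : Type*} [Finite ι] {X : ι → Ω → E} {Y : ι → Ω' → F}
    (hXm : ∀ i, AEMeasurable (X i) P) (hYm : ∀ i, AEMeasurable (Y i) P')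
    (hX : iIndepFun X P) (hY : iIndepFun Y P') :
    iIndepFun (fun i (q : Ω × Ω') => (X i q.1, Y i q.2)) (P.prod P') := by
  have := Fintype.ofFinite ι
  have := hX.isProbabilityMeasure
  have := hY.isProbabilityMeasure
  have : ∀ i, IsProbabilityMeasure (P.map (X i)) := fun i =>
    Measure.isProbabilityMeasure_map (hXm i)
  have : ∀ i, IsProbabilityMeasure (P'.map (Y i)) := fun i =>
    Measure.isProbabilityMeasure_map (hYm i)
  have hzip := (measurePreserving_arrowProdEquivProdArrow E F ι
    (fun i => P.map (X i)) (fun i => P'.map (Y i))).symm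
  have hpair : AEMeasurable (fun q : Ω × Ω' => (fun i => X i q.1, fun i => Y i q.2))
      (P.prod P') :=
    (aemeasurable_pi_lambda _ hXm).comp_fst.prodMk (aemeasurable_pi_lambda _ hYm).comp_snd
  rw [iIndepFun_iff_map_fun_eq_pi_map fun i => (hXm i).comp_fst.prodMk (hYm i).comp_snd]
  simp only [map_prodMk_fst_snd, hXm, hYm]
  rw [← hzip.map_eq, ← hX.map_fun_eq_pi_map hXm, ← hY.map_fun_eq_pi_map hYm,
    ← map_prodMk_fst_snd (aemeasurable_pi_lambda _ hXm) (aemeasurable_pi_lambda _ hYm),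
    AEMeasurable.map_map_of_aemeasurable hzip.measurable.aemeasurable hpair]
  rfl

lemma identDistrib_sub_swap {G : Type*} [AddGroup G] [MeasurableSpace G] [MeasurableSub₂ G]
    [SFinite P] {X : Ω → G} (hX : AEMeasurable X P) :
    IdentDistrib (fun q : Ω × Ω => X q.1 - X q.2) (-fun q : Ω × Ω => X q.1 - X q.2)
      (P.prod P) (P.prod P) := by
  have hsub : AEMeasurable (fun q : Ω × Ω => X q.1 - X q.2) (P.prod P) :=
    hX.comp_fst.sub hX.comp_snd
  have hsub_swap : AEMeasurable (fun q : Ω × Ω => X q.2 - X q.1) (P.prod P) :=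
    hX.comp_snd.sub hX.comp_fst
  have hneg : (-fun q : Ω × Ω => X q.1 - X q.2) = fun q => X q.2 - X q.1 :=
    funext fun q => neg_sub (X q.1) (X q.2)
  rw [hneg]
  refine ⟨hsub, hsub_swap, ?_⟩
  nth_rw 1 [← Measure.prod_swap]
  rw [AEMeasurable.map_map_of_aemeasurable (by rwa [Measure.prod_swap])
    measurable_swap.aemeasurable]
  rfl

end Independence

section Symmetrization

variable {Ω E : Type*} [MeasurableSpace Ω] {P : Measure Ω} [IsProbabilityMeasure P]
  [NormedAddCommGroup E] {r : ℝ≥0} {X : Ω → E}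

lemma norm_integral_rpow_le [NormedSpace ℝ E] (hr : 1 ≤ r) (hX : MemLp X r P) :
    ‖∫ ω, X ω ∂P‖ ^ (r : ℝ) ≤ ∫ ω, ‖X ω‖ ^ (r : ℝ) ∂P :=
  calc ‖∫ ω, X ω ∂P‖ ^ (r : ℝ) ≤ (∫ ω, ‖X ω‖ ∂P) ^ (r : ℝ) := by
        gcongr
        exact norm_integral_le_integral_norm X
    _ ≤ ∫ ω, ‖X ω‖ ^ (r : ℝ) ∂P :=
        (convexOn_rpow (mod_cast hr)).map_integral_le
          (Real.continuous_rpow_const r.coe_nonneg).continuousOn isClosed_Ici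
          (ae_of_all _ fun ω => norm_nonneg (X ω))
          (hX.integrable (mod_cast hr)).norm hX.integrable_norm_rpow'

theorem integral_norm_sub_integral_rpow_le [NormedSpace ℝ E] [CompleteSpace E] (hr : 1 ≤ r)
    (hX : MemLp X r P) :
    ∫ ω, ‖X ω - ∫ ω', X ω' ∂P‖ ^ (r : ℝ) ∂P ≤
      ∫ q, ‖X q.1 - X q.2‖ ^ (r : ℝ) ∂(P.prod P) := by
  have hint : Integrable (fun q : Ω × Ω => ‖X q.1 - X q.2‖ ^ (r : ℝ)) (P.prod P) :=
    ((hX.comp_fst P).sub (hX.comp_snd P)).integrable_norm_rpow'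
  rw [integral_prod _ hint]
  refine integral_mono_of_nonneg (ae_of_all _ fun _ => by positivity) hint.integral_prod_left
    (ae_of_all _ fun ω => ?_)
  have hmean : X ω - ∫ ω', X ω' ∂P = ∫ ω', (X ω - X ω') ∂P := by
    rw [integral_sub (integrable_const _) (hX.integrable (mod_cast hr)), integral_const,
      probReal_univ, one_smul]
  beta_reduce
  rw [hmean]
  exact norm_integral_rpow_le hr ((memLp_const (X ω)).sub hX)

lemma norm_sub_rpow_le {r : ℝ} (hr : 1 ≤ r) (x y : E) :
    ‖x - y‖ ^ r ≤ 2 ^ (r - 1) * (‖x‖ ^ r + ‖y‖ ^ r) :=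
  calc ‖x - y‖ ^ r ≤ (‖x‖ + ‖y‖) ^ r := by
        gcongr
        exact norm_sub_le x y
    _ ≤ 2 ^ (r - 1) * (‖x‖ ^ r + ‖y‖ ^ r) :=
        mod_cast NNReal.rpow_add_le_mul_rpow_add_rpow ‖x‖₊ ‖y‖₊ hr

lemma integral_norm_sub_rpow_prod_le (hr : 1 ≤ r) (hX : MemLp X r P) :
    ∫ q, ‖X q.1 - X q.2‖ ^ (r : ℝ) ∂(P.prod P) ≤ 2 ^ (r : ℝ) * ∫ ω, ‖X ω‖ ^ (r : ℝ) ∂P := by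
  have hint : Integrable (fun ω => ‖X ω‖ ^ (r : ℝ)) P := hX.integrable_norm_rpow'
  calc ∫ q, ‖X q.1 - X q.2‖ ^ (r : ℝ) ∂(P.prod P)
      ≤ ∫ q, 2 ^ ((r : ℝ) - 1) * (‖X q.1‖ ^ (r : ℝ) + ‖X q.2‖ ^ (r : ℝ)) ∂(P.prod P) :=
        integral_mono_of_nonneg (ae_of_all _ fun _ => by positivity)
          (((hint.comp_fst P).add (hint.comp_snd P)).const_mul _)
          (ae_of_all _ fun q => norm_sub_rpow_le (mod_cast hr) (X q.1) (X q.2))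
    _ = 2 ^ ((r : ℝ) - 1) * 2 * ∫ ω, ‖X ω‖ ^ (r : ℝ) ∂P := by
        rw [integral_const_mul, integral_add (hint.comp_fst P) (hint.comp_snd P),
          integral_fun_fst (fun ω => ‖X ω‖ ^ (r : ℝ)),
          integral_fun_snd (fun ω => ‖X ω‖ ^ (r : ℝ)), probReal_univ, one_smul, mul_assoc, two_mul]
    _ = 2 ^ (r : ℝ) * ∫ ω, ‖X ω‖ ^ (r : ℝ) ∂P := by
        rw [← Real.rpow_add_one two_ne_zero, sub_add_cancel]

end Symmetrization

section Rademacher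

/-- The Rademacher distribution: the uniform distribution on the two signs `-1, 1`, as a measure
on `ℝ` so that its integrals against real functions need no coercion. -/
noncomputable def rademacher : Measure ℝ :=
  (2⁻¹ : ℝ≥0∞) • (Measure.dirac 1 + Measure.dirac (-1))

instance : IsProbabilityMeasure rademacher :=
  ⟨by simp [rademacher, ENNReal.inv_two_add_inv_two]⟩

lemma ae_rademacher : ∀ᵐ ε ∂rademacher, ε = 1 ∨ ε = -1 := by
  refine Measure.ae_smul_measure (ae_add_measure_iff.2 ⟨?_, ?_⟩) _ <;> simp [ae_dirac_eq]

lemma integral_id_rademacher : ∫ ε, ε ∂rademacher = 0 := by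
  rw [rademacher, integral_smul_measure, integral_add_measure (integrable_dirac (by simp))
    (integrable_dirac (by simp))]
  simp

lemma hasSubgaussianMGF_mul_rademacher (y : ℝ) :
    HasSubgaussianMGF (fun ε => ε * y) (‖y‖₊ ^ 2) rademacher := by
  have hmem : ∀ᵐ ε ∂rademacher, ε * y ∈ Set.Icc (-|y|) |y| := by
    filter_upwards [ae_rademacher] with ε hε
    rcases hε with rfl | rfl <;> simp [neg_abs_le, neg_le_abs, le_abs_self]
  convert hasSubgaussianMGF_of_mem_Icc_of_integral_eq_zero (by fun_prop) hmem
    (by rw [integral_mul_const, integral_id_rademacher, zero_mul])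
  ext
  simp [← two_mul]

variable {ι : Type*} [Fintype ι]

lemma ae_pi_rademacher :
    ∀ᵐ ε ∂(Measure.pi fun _ : ι => rademacher), ∀ i, ε i = 1 ∨ ε i = -1 :=
  ae_all_iff.2 fun _ =>
    (Measure.tendsto_eval_ae_ae (μ := fun _ : ι => rademacher)).eventually ae_rademacher

lemma hasSubgaussianMGF_sum_mul_rademacher (y : ι → ℝ) :
    HasSubgaussianMGF (fun ε : ι → ℝ => ∑ i, ε i * y i) (∑ i, ‖y i‖₊ ^ 2)
      (Measure.pi fun _ => rademacher) := by
  refine HasSubgaussianMGF.sum_of_iIndepFun (iIndepFun_pi (μ := fun _ : ι => rademacher)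
    (X := fun i ε => ε * y i) fun _ => by fun_prop) fun i _ => ?_
  refine HasSubgaussianMGF.of_map (X := fun ε => ε * y i) (measurable_pi_apply i).aemeasurable ?_
  rw [(measurePreserving_eval (fun _ : ι => rademacher) i).map_eq]
  exact hasSubgaussianMGF_mul_rademacher (y i)

lemma rpow_half_sum_sq_le {r : ℝ} (hr : 2 ≤ r) (y : ι → ℝ) :
    (∑ i, y i ^ 2) ^ (r / 2) ≤ (Fintype.card ι : ℝ) ^ (r / 2 - 1) * ∑ i, |y i| ^ r := by
  have hpow (u : ℝ) : (u ^ 2) ^ (r / 2) = |u| ^ r := by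
    rw [Real.rpow_div_two_eq_sqrt _ (sq_nonneg u), Real.sqrt_sq_eq_abs]
  simpa only [hpow, Finset.card_univ] using
    Real.rpow_sum_le_const_mul_sum_rpow_of_nonneg Finset.univ (by linarith : 1 ≤ r / 2)
      fun i _ => sq_nonneg (y i)

theorem integral_abs_sum_rademacher_mul_rpow_le {r : ℝ} (hr : 2 ≤ r) (y : ι → ℝ) :
    ∫ ε, |∑ i, ε i * y i| ^ r ∂(Measure.pi fun _ => rademacher) ≤
      r ^ (r / 2) * (Fintype.card ι : ℝ) ^ (r / 2 - 1) * ∑ i, |y i| ^ r :=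
  calc ∫ ε, |∑ i, ε i * y i| ^ r ∂(Measure.pi fun _ => rademacher)
      ≤ ((∑ i, y i ^ 2) * r) ^ (r / 2) := by
        simpa using integral_abs_rpow_le_of_hasSubgaussianMGF_of_two_le
          (hasSubgaussianMGF_sum_mul_rademacher y) hr
    _ = r ^ (r / 2) * (∑ i, y i ^ 2) ^ (r / 2) := by
        rw [mul_comm, Real.mul_rpow (by linarith) (by positivity)]
    _ ≤ r ^ (r / 2) * (Fintype.card ι : ℝ) ^ (r / 2 - 1) * ∑ i, |y i| ^ r := by
        rw [mul_assoc]
        gcongr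
        exact rpow_half_sum_sq_le hr y

end Rademacher

section MarcinkiewiczZygmund

variable {Ω ι : Type*} [MeasurableSpace Ω] [Fintype ι] {P : Measure Ω}

lemma identDistrib_sum_sign_mul {D : ι → Ω → ℝ} (hD : iIndepFun D P)
    (hsymm : ∀ i, IdentDistrib (D i) (-D i) P P) {ε : ι → ℝ} (hε : ∀ i, ε i = 1 ∨ ε i = -1) :
    IdentDistrib (fun ω => ∑ i, ε i * D i ω) (fun ω => ∑ i, D i ω) P P := by
  have hsign (i) : IdentDistrib (fun ω => ε i * D i ω) (D i) P P := by
    rcases hε i with h | h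
    · simpa only [h, one_mul] using IdentDistrib.refl (hsymm i).aemeasurable_fst
    · simpa only [h, neg_one_mul] using! (hsymm i).symm
  exact (IdentDistrib.pi hsign (hD.comp (fun i => (ε i * ·)) fun i => by fun_prop) hD).comp
    (u := fun x : ι → ℝ => ∑ i, x i) (by fun_prop)

lemma memLp_sum_rademacher_mul [SFinite P] {D : ι → Ω → ℝ} {r : ℝ≥0∞}
    (hD : ∀ i, MemLp (D i) r P) :
    MemLp (fun q : (ι → ℝ) × Ω => ∑ i, q.1 i * D i q.2) r
      ((Measure.pi fun _ => rademacher).prod P) := by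
  refine memLp_finsetSum _ fun i _ => ?_
  have hDi := (hD i).comp_snd (Measure.pi fun _ : ι => rademacher)
  refine hDi.of_le ((by fun_prop : Measurable fun q : (ι → ℝ) × Ω => q.1 i).aestronglyMeasurable.mul
    hDi.aestronglyMeasurable) ?_
  filter_upwards [Measure.quasiMeasurePreserving_fst.ae ae_pi_rademacher] with q hq
  rcases hq i with h | h <;> simp [h]

theorem integral_abs_sum_rpow_le_of_identDistrib_neg {D : ι → Ω → ℝ} {r : ℝ≥0} (hr : 2 ≤ r)
    (hD : iIndepFun D P) (hsymm : ∀ i, IdentDistrib (D i) (-D i) P P)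
    (hmem : ∀ i, MemLp (D i) r P) :
    ∫ ω, |∑ i, D i ω| ^ (r : ℝ) ∂P ≤
      (r : ℝ) ^ ((r : ℝ) / 2) * (Fintype.card ι : ℝ) ^ ((r : ℝ) / 2 - 1) *
        ∑ i, ∫ ω, |D i ω| ^ (r : ℝ) ∂P := by
  have := hD.isProbabilityMeasure
  have hr' : (2 : ℝ) ≤ r := mod_cast hr
  have hint (i) : Integrable (fun ω => |D i ω| ^ (r : ℝ)) P := (hmem i).integrable_norm_rpow'
  calc ∫ ω, |∑ i, D i ω| ^ (r : ℝ) ∂P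
      = ∫ ε, ∫ ω, |∑ i, ε i * D i ω| ^ (r : ℝ) ∂P ∂(Measure.pi fun _ => rademacher) := by
        have hsign : (fun ε : ι → ℝ => ∫ ω, |∑ i, ε i * D i ω| ^ (r : ℝ) ∂P)
            =ᵐ[Measure.pi fun _ => rademacher] fun _ => ∫ ω, |∑ i, D i ω| ^ (r : ℝ) ∂P :=
          ae_pi_rademacher.mono fun ε hε =>
            ((identDistrib_sum_sign_mul hD hsymm hε).comp
              (u := fun x : ℝ => |x| ^ (r : ℝ)) (by fun_prop)).integral_eq
        rw [integral_congr_ae hsign, integral_const, probReal_univ, one_smul]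
    _ = ∫ ω, ∫ ε, |∑ i, ε i * D i ω| ^ (r : ℝ) ∂(Measure.pi fun _ => rademacher) ∂P :=
        integral_integral_swap (memLp_sum_rademacher_mul hmem).integrable_norm_rpow'
    _ ≤ ∫ ω, (r : ℝ) ^ ((r : ℝ) / 2) * (Fintype.card ι : ℝ) ^ ((r : ℝ) / 2 - 1) *
          ∑ i, |D i ω| ^ (r : ℝ) ∂P := by
        refine integral_mono_of_nonneg (ae_of_all _ fun _ => by positivity)
          ((integrable_finsetSum _ fun i _ => hint i).const_mul _) (ae_of_all _ fun ω => ?_)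
        exact integral_abs_sum_rademacher_mul_rpow_le hr' fun i => D i ω
    _ = _ := by rw [integral_const_mul, integral_finsetSum _ fun i _ => hint i]

theorem integral_abs_sum_sub_integral_rpow_le {Y : ι → Ω → ℝ} {r : ℝ≥0} (hr : 2 ≤ r)
    (hY : iIndepFun Y P) (hmem : ∀ i, MemLp (Y i) r P) :
    ∫ ω, |∑ i, (Y i ω - ∫ ω', Y i ω' ∂P)| ^ (r : ℝ) ∂P ≤
      (2 : ℝ) ^ (r : ℝ) * ((r : ℝ) ^ ((r : ℝ) / 2) * (Fintype.card ι : ℝ) ^ ((r : ℝ) / 2 - 1)) *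
        ∑ i, ∫ ω, |Y i ω| ^ (r : ℝ) ∂P := by
  have := hY.isProbabilityMeasure
  have hr1 : 1 ≤ r := one_le_two.trans hr
  have hYm (i) : AEMeasurable (Y i) P := (hmem i).aemeasurable
  have hindep : iIndepFun (fun i (q : Ω × Ω) => Y i q.1 - Y i q.2) (P.prod P) :=
    (iIndepFun_prodMk hYm hYm hY hY).comp (fun _ x => x.1 - x.2) fun _ => by fun_prop
  calc ∫ ω, |∑ i, (Y i ω - ∫ ω', Y i ω' ∂P)| ^ (r : ℝ) ∂P
      = ∫ ω, ‖∑ i, Y i ω - ∫ ω', ∑ i, Y i ω' ∂P‖ ^ (r : ℝ) ∂P := by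
        simp only [Finset.sum_sub_distrib, Real.norm_eq_abs, integral_finsetSum _ fun i _ =>
          (hmem i).integrable (mod_cast hr1)]
    _ ≤ ∫ q, ‖∑ i, Y i q.1 - ∑ i, Y i q.2‖ ^ (r : ℝ) ∂(P.prod P) :=
        integral_norm_sub_integral_rpow_le hr1 (memLp_finsetSum _ fun i _ => hmem i)
    _ = ∫ q, |∑ i, (Y i q.1 - Y i q.2)| ^ (r : ℝ) ∂(P.prod P) := by
        simp only [Finset.sum_sub_distrib, Real.norm_eq_abs]
    _ ≤ (r : ℝ) ^ ((r : ℝ) / 2) * (Fintype.card ι : ℝ) ^ ((r : ℝ) / 2 - 1) *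
          ∑ i, ∫ q, |Y i q.1 - Y i q.2| ^ (r : ℝ) ∂(P.prod P) :=
        integral_abs_sum_rpow_le_of_identDistrib_neg hr hindep
          (fun i => identDistrib_sub_swap (hYm i))
          fun i => ((hmem i).comp_fst P).sub ((hmem i).comp_snd P)
    _ ≤ (r : ℝ) ^ ((r : ℝ) / 2) * (Fintype.card ι : ℝ) ^ ((r : ℝ) / 2 - 1) *
          ∑ i, (2 : ℝ) ^ (r : ℝ) * ∫ ω, |Y i ω| ^ (r : ℝ) ∂P := by
        gcongr with i
        exact integral_norm_sub_rpow_prod_le hr1 (hmem i)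
    _ = _ := by
        rw [← Finset.mul_sum]
        ring

end MarcinkiewiczZygmund

section EmpiricalMean

variable {α ι : Type*} [MeasurableSpace α] [Fintype ι] {μ : Measure α} [IsProbabilityMeasure μ]

lemma two_rpow_mul_rpow_half_mul_div_rpow {r n : ℝ} (hr : 0 ≤ r) (hn : 0 < n) :
    2 ^ r * (r ^ (r / 2) * n ^ (r / 2 - 1)) * n / n ^ r = (2 * √r / √n) ^ r := by
  have hsq : n ^ r = n ^ (r / 2) * n ^ (r / 2) := by rw [← Real.rpow_add hn, add_halves]
  rw [Real.div_rpow (by positivity) (by positivity), Real.mul_rpow zero_le_two (by positivity),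
    ← Real.rpow_div_two_eq_sqrt _ hr, ← Real.rpow_div_two_eq_sqrt _ hn.le,
    Real.rpow_sub_one hn.ne', hsq]
  field_simp

theorem integral_abs_empiricalMean_sub_rpow_le [Nonempty ι] {f : α → ℝ} {r : ℝ≥0} (hr : 2 ≤ r)
    (hf : MemLp f r μ) :
    ∫ z : ι → α, |(∑ i, f (z i)) / Fintype.card ι - ∫ x, f x ∂μ| ^ (r : ℝ)
        ∂(Measure.pi fun _ => μ) ≤
      (2 * √(r : ℝ) / √(Fintype.card ι : ℝ)) ^ (r : ℝ) * ∫ x, |f x| ^ (r : ℝ) ∂μ := by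
  have hn : 0 < (Fintype.card ι : ℝ) := mod_cast Fintype.card_pos
  have hcenter (z : ι → α) : |(∑ i, f (z i)) / Fintype.card ι - ∫ x, f x ∂μ| ^ (r : ℝ) =
      |∑ i, (f (z i) - ∫ x, f x ∂μ)| ^ (r : ℝ) / (Fintype.card ι : ℝ) ^ (r : ℝ) := by
    rw [← Real.div_rpow (abs_nonneg _) hn.le, ← abs_of_pos hn, ← abs_div, abs_of_pos hn,
      Finset.sum_sub_distrib, Finset.sum_const, Finset.card_univ, nsmul_eq_mul, sub_div,
      mul_div_cancel_left₀ _ hn.ne']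
  have hsum : ∫ z : ι → α, |∑ i, (f (z i) - ∫ x, f x ∂μ)| ^ (r : ℝ) ∂(Measure.pi fun _ => μ) ≤
      (2 : ℝ) ^ (r : ℝ) * ((r : ℝ) ^ ((r : ℝ) / 2) * (Fintype.card ι : ℝ) ^ ((r : ℝ) / 2 - 1)) *
        (Fintype.card ι * ∫ x, |f x| ^ (r : ℝ) ∂μ) := by
    have hmz := integral_abs_sum_sub_integral_rpow_le hr
      (iIndepFun_pi (μ := fun _ : ι => μ) (X := fun _ => f) fun _ => hf.aemeasurable)
      fun i => hf.comp_measurePreserving (measurePreserving_eval (fun _ => μ) i)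
    have hmean (i : ι) : ∫ z, f (z i) ∂(Measure.pi fun _ => μ) = ∫ x, f x ∂μ :=
      integral_comp_eval hf.aestronglyMeasurable
    have hmoment (i : ι) :
        ∫ z, |f (z i)| ^ (r : ℝ) ∂(Measure.pi fun _ => μ) = ∫ x, |f x| ^ (r : ℝ) ∂μ :=
      integral_comp_eval (μ := fun _ : ι => μ) (f := fun x => |f x| ^ (r : ℝ))
        hf.integrable_norm_rpow'.aestronglyMeasurable
    simpa [hmean, hmoment] using hmz
  simp only [hcenter]
  rw [integral_div, div_le_iff₀ (by positivity),
    ← two_rpow_mul_rpow_half_mul_div_rpow r.coe_nonneg hn]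
  refine hsum.trans_eq ?_
  field_simp

end EmpiricalMean

section GaussianMixture

lemma hasSubgaussianMGF_id_gaussianReal (v : ℝ≥0) :
    HasSubgaussianMGF id v (gaussianReal 0 v) where
  integrable_exp_mul := integrable_exp_mul_gaussianReal
  mgf_le t := by simp [mgf_id_gaussianReal]

lemma isProbabilityMeasure_sum_smul {Ω ι : Type*} [MeasurableSpace Ω] {s : Finset ι}
    {w : ι → ℝ≥0∞} {ν : ι → Measure Ω} (hw : ∑ i ∈ s, w i = 1)
    (hν : ∀ i ∈ s, IsProbabilityMeasure (ν i)) : IsProbabilityMeasure (∑ i ∈ s, w i • ν i) where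
  measure_univ := by
    have hmass : ∀ i ∈ s, w i * ν i Set.univ = w i := fun i hi => by
      rw [(hν i hi).measure_univ, mul_one]
    simpa [Finset.sum_congr rfl hmass] using hw

lemma sum_ennreal_ofReal_eq_one {ι : Type*} {s : Finset ι} {w : ι → ℝ} (hw : ∀ i ∈ s, 0 ≤ w i)
    (hsum : ∑ i ∈ s, w i = 1) : ∑ i ∈ s, ENNReal.ofReal (w i) = 1 := by
  rw [← ENNReal.ofReal_sum_of_nonneg hw, hsum, ENNReal.ofReal_one]

variable {k : ℕ} {pw σ : Fin k → ℝ}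

lemma isProbabilityMeasure_gaussMixture (hpw : ∀ i, 0 ≤ pw i) (hsum : ∑ i, pw i = 1) :
    IsProbabilityMeasure (gaussMixture k pw σ) :=
  isProbabilityMeasure_sum_smul (sum_ennreal_ofReal_eq_one (fun i _ => hpw i) hsum)
    fun _ _ => instIsProbabilityMeasureGaussianReal 0 _

lemma hasSubgaussianMGF_id_gaussMixture (hpw : ∀ i, 0 ≤ pw i) (hsum : ∑ i, pw i = 1) {s : ℝ≥0}
    (hσ : ∀ i, |σ i| ≤ s) : HasSubgaussianMGF id (s ^ 2) (gaussMixture k pw σ) :=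
  hasSubgaussianMGF_sum_smul_measure (sum_ennreal_ofReal_eq_one (fun i _ => hpw i) hsum).le
    fun i _ => hasSubgaussianMGF_mono (hasSubgaussianMGF_id_gaussianReal _)
      (sq_le_sq.2 <| (hσ i).trans (le_abs_self _))

end GaussianMixture

theorem stmt2_general {μ : Measure ℝ} [IsProbabilityMeasure μ] {s : ℝ≥0}
    (hμ : HasSubgaussianMGF id (s ^ 2) μ) {p : ℕ} (hp : 0 < p) {N : ℕ} (hN : 0 < N) {t : ℝ≥0}
    (ht : 2 ≤ t) :
    ∫ z : Fin N → ℝ, |(∑ i, z i ^ p) / (N : ℝ) - ∫ x, x ^ p ∂μ| ^ (t : ℝ)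
        ∂(Measure.pi fun _ => μ) ≤
      (2 / √(N : ℝ) * s ^ p * (p : ℝ) ^ ((p : ℝ) / 2) *
        (t : ℝ) ^ (((p : ℝ) + 1) / 2)) ^ (t : ℝ) := by
  have : Nonempty (Fin N) := ⟨⟨0, hN⟩⟩
  have hpt : (2 : ℝ) ≤ p * t :=
    (mod_cast ht : (2 : ℝ) ≤ t).trans (le_mul_of_one_le_left t.coe_nonneg (mod_cast hp))
  calc _ ≤ (2 * √(t : ℝ) / √(N : ℝ)) ^ (t : ℝ) * ∫ x, |x ^ p| ^ (t : ℝ) ∂μ := by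
        simpa using integral_abs_empiricalMean_sub_rpow_le (ι := Fin N) ht
          (memLp_pow_of_hasSubgaussianMGF hμ hp.ne' t)
    _ ≤ (2 * √(t : ℝ) / √(N : ℝ)) ^ (t : ℝ) * (s ^ p * (p * t) ^ ((p : ℝ) / 2)) ^ (t : ℝ) := by
        gcongr
        exact integral_abs_pow_rpow_le_of_hasSubgaussianMGF hμ hpt
    _ = _ := by
        rw [← Real.mul_rpow (by positivity) (by positivity)]
        congr 1
        rw [Real.mul_rpow (by positivity) (by positivity), add_div,
          Real.rpow_add (by positivity), ← Real.sqrt_eq_rpow]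
        ring

/-- Moment bound for the deviation of the empirical `p`-th moment: there is a universal
constant `c' > 0` such that with `X := (1/N)·∑ Zᵢ^p − E[Z^p]` for i.i.d. samples `Zᵢ` from
the mixture, `E[|X|^t] ≤ ((c'/√N)·σmax^p·p^(p/2)·t^(p/2+1))^t` for every integer `t ≥ 2`. -/
theorem stmt2 :
    ∃ c' : ℝ, 0 < c' ∧
      ∀ (k : ℕ), 0 < k → ∀ (pw σ : Fin k → ℝ),
        (∀ i, 0 ≤ pw i) → (∑ i, pw i = 1) → (∀ i, 0 < σ i) →
        ∀ σmax : ℝ, IsGreatest (Set.range σ) σmax →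
        ∀ p : ℕ, Even p → 0 < p →
        ∀ N : ℕ, 0 < N →
        ∀ t : ℕ, 2 ≤ t →
          (∫ z : Fin N → ℝ,
              |(∑ i, z i ^ p) / (N : ℝ) - ∫ x, x ^ p ∂gaussMixture k pw σ| ^ t
            ∂(Measure.pi fun _ : Fin N => gaussMixture k pw σ)) ≤
          (c' / Real.sqrt N * σmax ^ p * (p : ℝ) ^ ((p : ℝ) / 2) *
            (t : ℝ) ^ ((p : ℝ) / 2 + 1)) ^ t := by
  refine ⟨2, two_pos, fun k hk pw σ hpw hsum hσ σmax hmax p _ hp N hN t ht => ?_⟩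
  have := isProbabilityMeasure_gaussMixture (σ := σ) hpw hsum
  lift σmax to ℝ≥0 using (hσ ⟨0, hk⟩).le.trans (hmax.2 ⟨_, rfl⟩)
  have hsub : HasSubgaussianMGF id (σmax ^ 2) (gaussMixture k pw σ) :=
    hasSubgaussianMGF_id_gaussMixture hpw hsum fun i =>
      (abs_of_pos (hσ i)).trans_le (hmax.2 ⟨i, rfl⟩)
  have hbound := stmt2_general hsub hp hN (mod_cast ht : (2 : ℝ≥0) ≤ t)
  simp only [NNReal.coe_natCast, Real.rpow_natCast] at hbound
  refine hbound.trans ?_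
  gcongr
  · exact_mod_cast one_le_two.trans ht
  · linarith
end

section
/- Let d, k ≥ 1, let p₁,…,p_k ≥ 0 sum to 1, let w₁,…,w_k ∈ ℝ^d, let a ∈ ℝ^d, and let ς ≥ 0. Let (x, y) be drawn from the mixture of spherical linear regressions: x is a standard Gaussian vector in ℝ^d, an index I ∈ {1,…,k} is drawn independently with Pr[I = i] = p_i, g ∼ N(0, ς²) is drawn independently, and y := ⟨w_I, x⟩ + g. Define the random matrix M^{x,y}_a := (1/2)·[ (y − ⟨a,x⟩)²·xxᵀ − (y − ⟨a,x⟩)²·I_d ]. Then E[M^{x,y}_a] = ∑_{i=1}^k p_i·(w_i − a)(w_i − a)ᵀ. -/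
open MeasureTheory ProbabilityTheory

/-- The standard Gaussian measure `N(0, I_d)` on `ℝ^d`. -/
noncomputable def stdGaussian (d : ℕ) : Measure (Fin d → ℝ) :=
  Measure.pi fun _ => gaussianReal 0 1

/-!
For a centered Gaussian measure, fourth moments are products of covariances (Isserlis): one
integration by parts gives `E X ^ 4 = 3 (Var X) ^ 2` in dimension one, and two polarisations extend
this to four linear functionals. Since terms of odd degree vanish by symmetry, integrating
`(L x + c) ^ 2` against `A x * B x - Cov(A, B)` leaves `2 Cov(L, A) Cov(L, B)`, whatever `c` is.
Conditionally on the component and the noise, the residual `y - ⟨a, x⟩` has the form `L x + c` with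
`L = ⟨w - a, ·⟩`, so the noise drops out and Fubini averages `(w - a)(w - a)ᵀ` over the mixture.
-/

open scoped ENNReal NNReal

/-- A real function has all moments if it lies in `L^p` for every finite `p`. Unlike integrability
this is stable under products, so it covers every polynomial in Gaussian variables at once. -/
def HasAllMoments {α : Type*} {_ : MeasurableSpace α} (f : α → ℝ) (μ : Measure α) : Prop :=
  ∀ p : ℝ≥0∞, p ≠ ∞ → MemLp f p μ

namespace HasAllMoments

variable {α : Type*} {_ : MeasurableSpace α} {μ : Measure α} {f g : α → ℝ}

theorem const [IsFiniteMeasure μ] (c : ℝ) : HasAllMoments (fun _ => c) μ :=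
  fun _ _ => memLp_const c

theorem add (hf : HasAllMoments f μ) (hg : HasAllMoments g μ) :
    HasAllMoments (fun x => f x + g x) μ :=
  fun p hp => (hf p hp).add (hg p hp)

theorem sub (hf : HasAllMoments f μ) (hg : HasAllMoments g μ) :
    HasAllMoments (fun x => f x - g x) μ :=
  fun p hp => (hf p hp).sub (hg p hp)

theorem const_mul (hf : HasAllMoments f μ) (c : ℝ) : HasAllMoments (fun x => c * f x) μ :=
  fun p hp => (hf p hp).const_mul c

theorem mul (hf : HasAllMoments f μ) (hg : HasAllMoments g μ) :
    HasAllMoments (fun x => f x * g x) μ := fun p hp => by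
  have : ENNReal.HolderTriple (p * 2) (p * 2) p := ⟨by
    rw [ENNReal.mul_inv (by simp) (by simp), ← mul_add, ENNReal.inv_two_add_inv_two, mul_one]⟩
  have hp2 : p * 2 ≠ ∞ := ENNReal.mul_ne_top hp (by simp)
  exact (hg _ hp2).mul' (hf _ hp2)

theorem pow [IsFiniteMeasure μ] (hf : HasAllMoments f μ) (n : ℕ) :
    HasAllMoments (fun x => f x ^ n) μ := by
  induction n with
  | zero => simpa only [pow_zero] using const 1
  | succ n ih => simpa only [pow_succ] using ih.mul hf

theorem integrable (hf : HasAllMoments f μ) : Integrable f μ :=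
  memLp_one_iff_integrable.mp (hf 1 (by simp))

end HasAllMoments

section NegInvariant

theorem integral_eq_zero_of_odd {G : Type*} [AddGroup G] [MeasurableSpace G] [MeasurableNeg G]
    {μ : Measure G} [μ.IsNegInvariant] {f : G → ℝ} (hf : f.Odd) : ∫ x, f x ∂μ = 0 := by
  have h : ∫ x, f x ∂μ = -∫ x, f x ∂μ := by
    rw [← integral_neg, ← integral_neg_eq_self]
    simp only [hf _]
  linarith

instance (v : ℝ≥0) : (gaussianReal 0 v).IsNegInvariant where
  neg_eq_self := gaussianReal_map_neg.trans (by rw [neg_zero])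

end NegInvariant

section GaussianReal

theorem hasAllMoments_id_gaussianReal (m : ℝ) (v : ℝ≥0) :
    HasAllMoments id (gaussianReal m v) :=
  memLp_id_gaussianReal'

theorem hasDerivAt_gaussianPDFReal (m : ℝ) (v : ℝ≥0) (x : ℝ) :
    HasDerivAt (gaussianPDFReal m v) (-((x - m) / v) * gaussianPDFReal m v x) x := by
  have hexp : HasDerivAt (fun y : ℝ => -(y - m) ^ 2 / (2 * v)) (-((x - m) / v)) x := by
    refine ((((hasDerivAt_id x).sub_const m).pow 2).neg.div_const (2 * v : ℝ)).congr_deriv ?_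
    simp only [id]
    field_simp
    push_cast
    ring
  rw [gaussianPDFReal_def]
  exact (hexp.exp.const_mul _).congr_deriv (by ring)

theorem integrable_mul_gaussianPDFReal {m : ℝ} {v : ℝ≥0} (hv : v ≠ 0) {f : ℝ → ℝ}
    (hf : Integrable f (gaussianReal m v)) :
    Integrable (fun x => f x * gaussianPDFReal m v x) := by
  rw [gaussianReal_of_var_ne_zero m hv, integrable_withDensity_iff (measurable_gaussianPDF m v)
    (.of_forall fun _ => gaussianPDF_lt_top)] at hf
  simpa only [toReal_gaussianPDF] using hf

-- Integration by parts, since `-v * φ'(x) = x * φ(x)` for the density `φ`.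
theorem integral_pow_add_two_gaussianReal (v : ℝ≥0) (n : ℕ) :
    ∫ x, x ^ (n + 2) ∂gaussianReal 0 v = (n + 1) * v * ∫ x, x ^ n ∂gaussianReal 0 v := by
  rcases eq_or_ne v 0 with rfl | hv
  · simp
  have hint (k : ℕ) : Integrable (fun x => x ^ k * gaussianPDFReal 0 v x) :=
    integrable_mul_gaussianPDFReal hv ((hasAllMoments_id_gaussianReal 0 v).pow k).integrable
  have hparts := integral_mul_deriv_eq_deriv_mul_of_integrable
    (u := fun x => x ^ (n + 1)) (v := gaussianPDFReal 0 v)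
    (fun x _ => hasDerivAt_pow (n + 1) x) (fun x _ => hasDerivAt_gaussianPDFReal 0 v x)
    (((hint (n + 2)).const_mul (-(v : ℝ)⁻¹)).congr (.of_forall fun x => by
      simp only [Pi.mul_apply]; ring))
    (((hint n).const_mul (n + 1)).congr (.of_forall fun x => by
      simp only [Pi.mul_apply, Nat.cast_add, Nat.cast_one, Nat.add_sub_cancel]; ring))
    (hint (n + 1))
  have hv' : (v : ℝ) ≠ 0 := NNReal.coe_ne_zero.mpr hv
  simp only [integral_gaussianReal_eq_integral_smul hv, smul_eq_mul]
  calc ∫ x, gaussianPDFReal 0 v x * x ^ (n + 2)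
      = -v * ∫ x, x ^ (n + 1) * (-((x - 0) / v) * gaussianPDFReal 0 v x) := by
        rw [← integral_const_mul]
        congr with x
        field_simp
        ring
    _ = v * ∫ x, ((n + 1 : ℕ) : ℝ) * x ^ n * gaussianPDFReal 0 v x := by
        rw [hparts, Nat.add_sub_cancel]; ring
    _ = (n + 1) * v * ∫ x, gaussianPDFReal 0 v x * x ^ n := by
        simp_rw [mul_assoc, integral_const_mul, mul_comm (gaussianPDFReal 0 v _)]
        push_cast
        ring

theorem integral_pow_four_gaussianReal (v : ℝ≥0) :
    ∫ x, x ^ 4 ∂gaussianReal 0 v = 3 * (v : ℝ) ^ 2 := by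
  rw [integral_pow_add_two_gaussianReal v 2, integral_pow_add_two_gaussianReal v 0]
  simp only [pow_zero, integral_const, probReal_univ, smul_eq_mul]
  push_cast
  ring

end GaussianReal

section GaussianBanach

variable {E : Type*} [NormedAddCommGroup E] [NormedSpace ℝ E] [MeasurableSpace E] [BorelSpace E]

theorem hasAllMoments_dual (μ : Measure E) [IsGaussian μ] (L : StrongDual ℝ E) :
    HasAllMoments L μ :=
  IsGaussian.memLp_dual μ L

theorem integral_dual_eq_zero {μ : Measure E} [μ.IsNegInvariant] (L : StrongDual ℝ E) :
    ∫ x, L x ∂μ = 0 :=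
  integral_eq_zero_of_odd L.map_neg

variable [CompleteSpace E] [SecondCountableTopology E] {μ : Measure E} [IsGaussian μ]
  [μ.IsNegInvariant]

theorem covarianceBilinDual_eq_integral_mul (L M : StrongDual ℝ E) :
    covarianceBilinDual μ L M = ∫ x, L x * M x ∂μ := by
  simp only [covarianceBilinDual_apply IsGaussian.memLp_two_id, integral_dual_eq_zero, sub_zero]

theorem integral_dual_pow_four (L : StrongDual ℝ E) :
    ∫ x, L x ^ 4 ∂μ = 3 * covarianceBilinDual μ L L ^ 2 := by
  rw [← integral_map (φ := L) (f := fun y : ℝ => y ^ 4) (by fun_prop) (by fun_prop),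
    IsGaussian.map_eq_gaussianReal L, integral_dual_eq_zero, integral_pow_four_gaussianReal,
    covarianceBilinDual_self_eq_variance IsGaussian.memLp_two_id,
    Real.coe_toNNReal _ (variance_nonneg _ _)]

theorem integral_dual_sq_mul_sq (L M : StrongDual ℝ E) :
    ∫ x, L x ^ 2 * M x ^ 2 ∂μ = covarianceBilinDual μ L L * covarianceBilinDual μ M M
      + 2 * covarianceBilinDual μ L M ^ 2 := by
  have hint (N : StrongDual ℝ E) : HasAllMoments (fun x => N x ^ 4) μ :=
    (hasAllMoments_dual μ N).pow 4
  have hpolar : ∀ x, L x ^ 2 * M x ^ 2 =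
      (((L + M) x ^ 4 + (L - M) x ^ 4) - 2 * (L x ^ 4 + M x ^ 4)) / 12 := fun x => by
    simp only [add_apply, sub_apply]
    ring
  simp_rw [hpolar]
  rw [integral_div, integral_sub ((hint _).add (hint _)).integrable
    (((hint _).add (hint _)).const_mul 2).integrable, integral_const_mul,
    integral_add (hint _).integrable (hint _).integrable,
    integral_add (hint _).integrable (hint _).integrable]
  simp only [integral_dual_pow_four]
  simp only [map_add, map_sub, add_apply, sub_apply, covarianceBilinDual_comm M L]
  ring

theorem integral_dual_mul_mul_mul (A B C D : StrongDual ℝ E) :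
    ∫ x, A x * B x * (C x * D x) ∂μ =
      covarianceBilinDual μ A B * covarianceBilinDual μ C D
      + covarianceBilinDual μ A C * covarianceBilinDual μ B D
      + covarianceBilinDual μ A D * covarianceBilinDual μ B C := by
  have hint (M N : StrongDual ℝ E) : HasAllMoments (fun x => M x ^ 2 * N x ^ 2) μ :=
    ((hasAllMoments_dual μ M).pow 2).mul ((hasAllMoments_dual μ N).pow 2)
  have hpolar : ∀ x, A x * B x * (C x * D x) =
      (((A + B) x ^ 2 * (C + D) x ^ 2 - (A + B) x ^ 2 * (C - D) x ^ 2)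
        - ((A - B) x ^ 2 * (C + D) x ^ 2 - (A - B) x ^ 2 * (C - D) x ^ 2)) / 16 := fun x => by
    simp only [add_apply, sub_apply]
    ring
  simp_rw [hpolar]
  rw [integral_div, integral_sub ((hint _ _).sub (hint _ _)).integrable
    ((hint _ _).sub (hint _ _)).integrable,
    integral_sub (hint _ _).integrable (hint _ _).integrable,
    integral_sub (hint _ _).integrable (hint _ _).integrable]
  simp only [integral_dual_sq_mul_sq]
  simp only [map_add, map_sub, add_apply, sub_apply,
    covarianceBilinDual_comm B A, covarianceBilinDual_comm D C]
  ring

theorem integral_dual_add_sq_mul_sub (L A B : StrongDual ℝ E) (c : ℝ) :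
    ∫ x, (L x + c) ^ 2 * (A x * B x - covarianceBilinDual μ A B) ∂μ =
      2 * (covarianceBilinDual μ L A * covarianceBilinDual μ L B) := by
  set κ := covarianceBilinDual μ A B with hκ
  have hdual := hasAllMoments_dual μ
  have hprod (M N : StrongDual ℝ E) : HasAllMoments (fun x => M x * N x) μ :=
    (hdual M).mul (hdual N)
  have hdev : HasAllMoments (fun x => A x * B x - κ) μ := (hprod A B).sub (.const κ)
  have hquartic := (hprod L L).mul (hprod A B)
  have hsq := (hprod L L).const_mul κ
  have hlin := ((hdual L).mul hdev).const_mul (2 * c)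
  have hlin_zero : ∫ x, 2 * c * (L x * (A x * B x - κ)) ∂μ = 0 :=
    integral_eq_zero_of_odd fun x => by simp only [map_neg]; ring
  have hconst_zero : ∫ x, c ^ 2 * (A x * B x - κ) ∂μ = 0 := by
    rw [integral_const_mul, integral_sub (hprod A B).integrable (integrable_const κ),
      ← covarianceBilinDual_eq_integral_mul, ← hκ, integral_const, probReal_univ, one_smul,
      sub_self, mul_zero]
  calc ∫ x, (L x + c) ^ 2 * (A x * B x - κ) ∂μ
      = ∫ x, (L x * L x * (A x * B x) - κ * (L x * L x)) + 2 * c * (L x * (A x * B x - κ))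
          + c ^ 2 * (A x * B x - κ) ∂μ := by congr with x; ring
    _ = ∫ x, L x * L x * (A x * B x) ∂μ - κ * ∫ x, L x * L x ∂μ := by
        rw [integral_add ((hquartic.sub hsq).add hlin).integrable (hdev.const_mul _).integrable,
          integral_add (hquartic.sub hsq).integrable hlin.integrable, hlin_zero, hconst_zero,
          integral_sub hquartic.integrable hsq.integrable, integral_const_mul, add_zero, add_zero]
    _ = 2 * (covarianceBilinDual μ L A * covarianceBilinDual μ L B) := by
        rw [integral_dual_mul_mul_mul, ← covarianceBilinDual_eq_integral_mul]
        ring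

end GaussianBanach

section StdGaussian

theorem iIndepFun_eval_pi {ι : Type*} [Fintype ι] {Ω : ι → Type*} [∀ i, MeasurableSpace (Ω i)]
    (μ : ∀ i, Measure (Ω i)) [∀ i, IsProbabilityMeasure (μ i)] :
    iIndepFun (fun i (x : ∀ i, Ω i) => x i) (Measure.pi μ) :=
  iIndepFun_pi (X := fun _ x => x) fun _ => aemeasurable_id

theorem isGaussian_pi {ι : Type*} [Fintype ι] {E : ι → Type*} [∀ i, NormedAddCommGroup (E i)]
    [∀ i, NormedSpace ℝ (E i)] [∀ i, CompleteSpace (E i)] [∀ i, SecondCountableTopology (E i)]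
    [∀ i, MeasurableSpace (E i)] [∀ i, BorelSpace (E i)] (μ : ∀ i, Measure (E i))
    [∀ i, IsGaussian (μ i)] : IsGaussian (Measure.pi μ) := by
  have hlaw (i : ι) : HasGaussianLaw (fun x : ∀ i, E i => x i) (Measure.pi μ) :=
    ⟨by rw [(measurePreserving_eval μ i).map_eq]; infer_instance⟩
  simpa using ((iIndepFun_eval_pi μ).hasGaussianLaw hlaw).isGaussian_map

variable {d : ℕ}

instance : IsGaussian (stdGaussian d) := isGaussian_pi _

instance : (stdGaussian d).IsNegInvariant := Measure.pi.isNegInvariant _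

theorem hasAllMoments_eval_stdGaussian (j : Fin d) :
    HasAllMoments (fun x => x j) (stdGaussian d) :=
  hasAllMoments_dual (stdGaussian d) (.proj (R := ℝ) (φ := fun _ : Fin d => ℝ) j)

theorem covarianceBilinDual_stdGaussian_proj (j l : Fin d) :
    covarianceBilinDual (stdGaussian d) (.proj j) (.proj l) = if j = l then 1 else 0 := by
  rcases eq_or_ne j l with rfl | hjl
  · rw [covarianceBilinDual_self_eq_variance IsGaussian.memLp_two_id, if_pos rfl]
    exact ((measurePreserving_eval (fun _ => gaussianReal 0 1) j).variance_fun_comp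
      aemeasurable_id).trans variance_id_gaussianReal
  · rw [covarianceBilinDual_eq_covariance IsGaussian.memLp_two_id, if_neg hjl]
    exact ((iIndepFun_eval_pi fun _ => gaussianReal 0 1).indepFun hjl).covariance_eq_zero
      (hasAllMoments_eval_stdGaussian j 2 ENNReal.ofNat_ne_top)
      (hasAllMoments_eval_stdGaussian l 2 ENNReal.ofNat_ne_top)

theorem integral_sum_mul_add_sq_mul_sub_stdGaussian (u : Fin d → ℝ) (c : ℝ) (j j' : Fin d) :
    ∫ x, ((∑ l, u l * x l) + c) ^ 2 * (x j * x j' - if j = j' then 1 else 0) ∂stdGaussian d =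
      2 * (u j * u j') := by
  have hcov (i : Fin d) : covarianceBilinDual (stdGaussian d)
      (∑ l, u l • .proj l) (.proj i) = u i := by
    simp [covarianceBilinDual_stdGaussian_proj]
  have h := integral_dual_add_sq_mul_sub (μ := stdGaussian d) (∑ l, u l • .proj l)
    (.proj j) (.proj j') c
  simpa [hcov, covarianceBilinDual_stdGaussian_proj] using h

end StdGaussian

section Mixture

theorem integrable_prod_sq_sum_mul {ι α Ω : Type*} [Fintype ι] {_ : MeasurableSpace α}
    {_ : MeasurableSpace Ω} {μ : Measure α} {ρ : Measure Ω} [SFinite ρ] {g : ι → α → ℝ}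
    {f : ι → Ω → ℝ} {h : α → ℝ} (hg : ∀ i m, Integrable (fun x => g i x * g m x * h x) μ)
    (hf : ∀ i, MemLp (f i) 2 ρ) :
    Integrable (fun p : α × Ω => (∑ i, f i p.2 * g i p.1) ^ 2 * h p.1) (μ.prod ρ) := by
  have hexpand : ∀ p : α × Ω, (∑ i, f i p.2 * g i p.1) ^ 2 * h p.1 =
      ∑ i, ∑ m, (g i p.1 * g m p.1 * h p.1) * (f i p.2 * f m p.2) := fun p => by
    simp_rw [sq, Finset.sum_mul_sum, Finset.sum_mul]
    exact Finset.sum_congr rfl fun i _ => Finset.sum_congr rfl fun m _ => by ring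
  simp_rw [hexpand]
  exact integrable_finsetSum _ fun i _ => integrable_finsetSum _ fun m _ =>
    (hg i m).mul_prod ((hf i).integrable_mul (hf m))

theorem integrable_sum_mul_add_sq_mul_sub {Ω : Type*} [MeasurableSpace Ω] {ρ : Measure Ω}
    [SFinite ρ] {d : ℕ} {U : Ω → Fin d → ℝ} {G : Ω → ℝ}
    (hU : ∀ l, MemLp (fun ω => U ω l) 2 ρ) (hG : MemLp G 2 ρ) (c : ℝ) (j j' : Fin d) :
    Integrable (fun p : (Fin d → ℝ) × Ω =>
      ((∑ l, U p.2 l * p.1 l) + G p.2) ^ 2 * (p.1 j * p.1 j' - c)) ((stdGaussian d).prod ρ) := by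
  have hdev :=
    ((hasAllMoments_eval_stdGaussian j).mul (hasAllMoments_eval_stdGaussian j')).sub (.const c)
  -- `none` indexes the constant regressor `1`, with the noise as its coefficient.
  have hcoord : ∀ i : Option (Fin d),
      HasAllMoments (fun x => i.elim 1 x) (stdGaussian d)
    | none => .const 1
    | some l => hasAllMoments_eval_stdGaussian l
  have hcoeff : ∀ i : Option (Fin d), MemLp (fun ω => i.elim (G ω) (U ω)) 2 ρ
    | none => hG
    | some l => hU l
  have h := integrable_prod_sq_sum_mul
    (fun i m => (((hcoord i).mul (hcoord m)).mul hdev).integrable) hcoeff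
  simpa [Fintype.sum_option, add_comm] using h

instance {ι α : Type*} [Fintype ι] [MeasurableSpace α] (q : ι → ℝ) (x : ι → α) :
    IsFiniteMeasure (∑ i, ENNReal.ofReal (q i) • Measure.dirac (x i)) :=
  ⟨by simp⟩

theorem integral_prod_sum_ofReal_smul_dirac {α ι : Type*} [MeasurableSpace α] (ν : Measure α)
    [IsProbabilityMeasure ν] [Fintype ι] [MeasurableSpace ι] [MeasurableSingletonClass ι]
    {q : ι → ℝ} (hq : ∀ i, 0 ≤ q i) (f : ι → ℝ) :
    ∫ z, f z.2 ∂(ν.prod (∑ i, ENNReal.ofReal (q i) • Measure.dirac i)) = ∑ i, q i * f i := by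
  rw [integral_fun_snd, probReal_univ, one_smul, integral_finsetSum_measure fun i _ =>
    (integrable_dirac (by simp)).smul_measure ENNReal.ofReal_ne_top]
  simp only [integral_smul_measure, integral_dirac, ENNReal.toReal_ofReal (hq _), smul_eq_mul]

-- A point `ω` carries the latent regressor `W ω` together with the noise `G ω`, which may depend on
-- each other.
theorem stmt5_general {Ω : Type*} [MeasurableSpace Ω] (ρ : Measure Ω) [IsFiniteMeasure ρ] {d : ℕ}
    {W : Ω → Fin d → ℝ} {G : Ω → ℝ} (hW : ∀ l, MemLp (fun ω => W ω l) 2 ρ) (hG : MemLp G 2 ρ)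
    (a : Fin d → ℝ) (j j' : Fin d) :
    (∫ p : (Fin d → ℝ) × Ω,
        (1 / 2) *
          ((((∑ l, W p.2 l * p.1 l) + G p.2) - ∑ l, a l * p.1 l) ^ 2 * (p.1 j * p.1 j') -
            (((∑ l, W p.2 l * p.1 l) + G p.2) - ∑ l, a l * p.1 l) ^ 2 *
              (if j = j' then 1 else 0))
      ∂((stdGaussian d).prod ρ)) =
      ∫ ω, (W ω j - a j) * (W ω j' - a j') ∂ρ := by
  have hresidual : ∀ p : (Fin d → ℝ) × Ω, ((∑ l, W p.2 l * p.1 l) + G p.2) - ∑ l, a l * p.1 l =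
      (∑ l, (W p.2 l - a l) * p.1 l) + G p.2 := fun p => by
    simp_rw [sub_mul, Finset.sum_sub_distrib]
    ring
  simp_rw [hresidual, ← mul_sub]
  have hint := integrable_sum_mul_add_sq_mul_sub (U := fun ω l => W ω l - a l)
    (fun l => (hW l).sub (memLp_const (a l))) hG (if j = j' then 1 else 0) j j'
  rw [integral_const_mul, integral_prod_symm _ hint]
  simp_rw [integral_sum_mul_add_sq_mul_sub_stdGaussian, integral_const_mul]
  ring

end Mixture

/-- For a sample `(x, y)` from a mixture of spherical linear regressions with mixing weights
`pw`, regressors `w`, and noise rate `ς` — modeled as `ω = (x, g, I)` with `x ∼ N(0, I_d)`,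
`g ∼ N(0, ς²)`, `I` drawn with `Pr[I = i] = pw i`, and `y = ⟨w_I, x⟩ + g` — the matrix
`M = (1/2)·[(y − ⟨a,x⟩)²·xxᵀ − (y − ⟨a,x⟩)²·I_d]` satisfies, entrywise,
`E[M] = ∑ i, pw i·(w i − a)(w i − a)ᵀ`. -/
theorem stmt5 (d k : ℕ) (hd : 0 < d) (hk : 0 < k)
    (pw : Fin k → ℝ) (hpw : ∀ i, 0 ≤ pw i) (hsum : ∑ i, pw i = 1)
    (w : Fin k → Fin d → ℝ) (a : Fin d → ℝ) (ς : ℝ) (hς : 0 ≤ ς) :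
    ∀ j j' : Fin d,
      (∫ ω : (Fin d → ℝ) × ℝ × Fin k,
          (1 / 2) *
            ((((∑ l, w ω.2.2 l * ω.1 l) + ω.2.1) - ∑ l, a l * ω.1 l) ^ 2 *
                (ω.1 j * ω.1 j') -
              (((∑ l, w ω.2.2 l * ω.1 l) + ω.2.1) - ∑ l, a l * ω.1 l) ^ 2 *
                (if j = j' then 1 else 0))
        ∂((stdGaussian d).prod
            ((gaussianReal 0 ⟨ς ^ 2, sq_nonneg ς⟩).prod
              (∑ i, ENNReal.ofReal (pw i) • Measure.dirac i))))
      = ∑ i, pw i * ((w i j - a j) * (w i j' - a j')) := by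
  intro j j'
  -- Instance search fails here: the anonymous constructor has type `{r : ℝ // 0 ≤ r}`, not `ℝ≥0`.
  have : IsProbabilityMeasure (gaussianReal 0 ⟨ς ^ 2, sq_nonneg ς⟩) :=
    instIsProbabilityMeasureGaussianReal 0 _
  have hnoise : MemLp id 2 (gaussianReal 0 ⟨ς ^ 2, sq_nonneg ς⟩) := memLp_id_gaussianReal 2
  exact (stmt5_general _ (fun l => (MemLp.of_discrete (f := (w · l))).comp_snd _)
    (hnoise.comp_fst _) a j j').trans
    (integral_prod_sum_ofReal_smul_dirac _ hpw fun i => (w i j - a j) * (w i j' - a j'))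
end

section
/- Let ε ≥ 0, and let A, Â ∈ ℝ^{d×d} be positive semidefinite matrices of rank k with ‖A − Â‖_op ≤ ε. Suppose every nonzero eigenvalue of A is at least λ > 0. Let U ∈ ℝ^{d×k} and Û ∈ ℝ^{d×k} be matrices whose columns are orthonormal and span the range of A and of Â, respectively. Then for all unit vectors a, b ∈ ℝ^d lying in the column span of Û, one has ⟨Uᵀa, Uᵀb⟩ ≥ ⟨a, b⟩ − ε/λ. In particular, taking a = b, ‖Uᵀa‖₂² ≥ 1 − ε/λ. -/
open MeasureTheory

/-- The Euclidean norm on `ℝ^n`. -/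
noncomputable def e2norm {n : ℕ} (v : Fin n → ℝ) : ℝ := Real.sqrt (∑ i, v i ^ 2)

/-!
The range of `U` is `ε/λ`-close to the range of `Â`: if `y = A x` with `x` orthogonal to `ker A`,
then `λ ‖x‖ ≤ ‖y‖`, so `‖y - Â x‖ ≤ ε ‖x‖ ≤ (ε/λ) ‖y‖`. Between subspaces of equal dimension such
a one-sided bound is symmetric, so with `P` the orthogonal projection onto the range of `U`, the
residual `a - P a` of a vector `a` of the range of `Û` has norm at most `min 1 (ε/λ) ‖a‖`. As
`⟨a, b⟩ - ⟨Uᵀ a, Uᵀ b⟩ = ⟨a - P a, b - P b⟩`, Cauchy–Schwarz bounds the defect by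
`min 1 (ε/λ) ^ 2 ≤ ε/λ` for unit vectors.
-/

open Matrix Module WithLp
open scoped InnerProductSpace Matrix.Norms.L2Operator

section Subspace

variable {𝕜 E : Type*} [RCLike 𝕜] [NormedAddCommGroup E] [InnerProductSpace 𝕜 E]
  {δ : ℝ} {S T : Submodule 𝕜 E}

lemma norm_starProjection_orthogonal_le_norm_sub [T.HasOrthogonalProjection] (x : E) {y : E}
    (hy : y ∈ T) : ‖Tᗮ.starProjection x‖ ≤ ‖x - y‖ := by
  have hxy : Tᗮ.starProjection (x - y) = Tᗮ.starProjection x := by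
    rw [map_sub, Submodule.starProjection_orthogonal_apply_eq_zero hy, sub_zero]
  exact hxy ▸ Tᗮ.norm_starProjection_apply_le (x - y)

lemma inner_sub_inner_starProjection_left [T.HasOrthogonalProjection] (x y : E) :
    ⟪x, y⟫_𝕜 - ⟪T.starProjection x, y⟫_𝕜 = ⟪Tᗮ.starProjection x, Tᗮ.starProjection y⟫_𝕜 := by
  rw [← inner_sub_left, ← Submodule.starProjection_orthogonal_val,
    ← Submodule.inner_starProjection_left_eq_right,
    Submodule.starProjection_eq_self_iff.2 (Tᗮ.starProjection_apply_mem x)]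

lemma norm_starProjection_sq_eq_re_inner [T.HasOrthogonalProjection] (x : E) :
    ‖T.starProjection x‖ ^ 2 = RCLike.re ⟪T.starProjection x, x⟫_𝕜 := by
  rw [T.re_inner_starProjection_eq_normSq, T.starProjection_apply, Submodule.coe_norm]

/-- `SubspaceGapLE δ S T` says that every `x ∈ S` lies within `δ * ‖x‖` of `T`, i.e. that Kato's
one-sided gap from `S` to `T` is at most `δ`. The distance to `T` is written as the norm of the
projection onto `Tᗮ`. -/
def SubspaceGapLE (δ : ℝ) (S T : Submodule 𝕜 E) [T.HasOrthogonalProjection] : Prop :=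
  ∀ x ∈ S, ‖Tᗮ.starProjection x‖ ≤ δ * ‖x‖

namespace SubspaceGapLE

lemma min_one [T.HasOrthogonalProjection] (h : SubspaceGapLE δ S T) :
    SubspaceGapLE (min 1 δ) S T := by
  intro x hx
  rw [min_mul_of_nonneg _ _ (norm_nonneg x), one_mul]
  exact le_min (Tᗮ.norm_starProjection_apply_le x) (h x hx)

lemma one_sub_sq_mul_norm_sq_le [T.HasOrthogonalProjection] (h : SubspaceGapLE δ S T) {x : E}
    (hx : x ∈ S) : (1 - δ ^ 2) * ‖x‖ ^ 2 ≤ ‖T.starProjection x‖ ^ 2 := by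
  have hpyth := T.norm_sq_eq_add_norm_sq_starProjection x
  have hres : ‖Tᗮ.starProjection x‖ ^ 2 ≤ (δ * ‖x‖) ^ 2 := by gcongr; exact h x hx
  linarith [mul_pow δ ‖x‖ 2]

lemma exists_starProjection_eq [FiniteDimensional 𝕜 S] [FiniteDimensional 𝕜 T]
    (h : SubspaceGapLE δ S T) (hδ : δ ^ 2 < 1) (hdim : finrank 𝕜 T ≤ finrank 𝕜 S) {y : E}
    (hy : y ∈ T) : ∃ x ∈ S, T.starProjection x = y := by
  let P : S →ₗ[𝕜] T := T.orthogonalProjectionOnto.toLinearMap ∘ₗ S.subtype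
  have hP (x : S) : (P x : E) = T.starProjection x := rfl
  have hinj : Function.Injective P := by
    rw [injective_iff_map_eq_zero]
    intro x hx
    have hbound := h.one_sub_sq_mul_norm_sq_le x.2
    rw [← hP, hx, Submodule.coe_zero, norm_zero, zero_pow two_ne_zero] at hbound
    have hnorm : ‖(x : E)‖ ^ 2 ≤ 0 := nonpos_of_mul_nonpos_right hbound (sub_pos.2 hδ)
    simpa using hnorm.antisymm (sq_nonneg _)
  have heq : finrank 𝕜 S = finrank 𝕜 T :=
    (LinearMap.finrank_le_finrank_of_injective hinj).antisymm hdim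
  obtain ⟨x, hx⟩ :=
    (LinearMap.injective_iff_surjective_of_finrank_eq_finrank heq).1 hinj ⟨y, hy⟩
  exact ⟨x, x.2, by rw [← hP, hx]⟩

theorem symm [FiniteDimensional 𝕜 S] [FiniteDimensional 𝕜 T] (h : SubspaceGapLE δ S T)
    (hδ : 0 ≤ δ) (hdim : finrank 𝕜 T ≤ finrank 𝕜 S) : SubspaceGapLE δ T S := by
  intro y hy
  obtain hδ1 | hδ1 := le_or_gt 1 δ
  · exact (Sᗮ.norm_starProjection_apply_le y).trans (le_mul_of_one_le_left (norm_nonneg y) hδ1)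
  have hδsq : δ ^ 2 < 1 := pow_lt_one₀ hδ hδ1 two_ne_zero
  obtain ⟨x, hx, rfl⟩ := h.exists_starProjection_eq hδsq hdim hy
  set y := T.starProjection x
  have hcauchy : ‖y‖ ^ 2 ≤ ‖S.starProjection y‖ * ‖x‖ := by
    rw [norm_starProjection_sq_eq_re_inner, ← Submodule.starProjection_eq_self_iff.2 hx,
      ← Submodule.inner_starProjection_left_eq_right, Submodule.starProjection_eq_self_iff.2 hx]
    exact re_inner_le_norm _ _
  have hproj : (1 - δ ^ 2) * ‖y‖ ^ 2 ≤ ‖S.starProjection y‖ ^ 2 := by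
    obtain hy0 | hy0 := (sq_nonneg ‖y‖).eq_or_lt
    · rw [← hy0, mul_zero]
      positivity
    refine le_of_mul_le_mul_right ?_ hy0
    calc (1 - δ ^ 2) * ‖y‖ ^ 2 * ‖y‖ ^ 2 = (1 - δ ^ 2) * (‖y‖ ^ 2) ^ 2 := by ring
      _ ≤ (1 - δ ^ 2) * (‖S.starProjection y‖ * ‖x‖) ^ 2 := by gcongr
      _ = ‖S.starProjection y‖ ^ 2 * ((1 - δ ^ 2) * ‖x‖ ^ 2) := by ring
      _ ≤ ‖S.starProjection y‖ ^ 2 * ‖y‖ ^ 2 := by gcongr; exact h.one_sub_sq_mul_norm_sq_le hx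
  have hpyth := S.norm_sq_eq_add_norm_sq_starProjection y
  refine le_of_sq_le_sq ?_ (by positivity)
  linarith [mul_pow δ ‖y‖ 2]

lemma norm_inner_sub_inner_starProjection_le [T.HasOrthogonalProjection]
    (h : SubspaceGapLE δ S T) {a b : E} (ha : a ∈ S) (hb : b ∈ S) :
    ‖⟪a, b⟫_𝕜 - ⟪T.starProjection a, b⟫_𝕜‖ ≤ δ ^ 2 * (‖a‖ * ‖b‖) := by
  rw [inner_sub_inner_starProjection_left]
  calc ‖⟪Tᗮ.starProjection a, Tᗮ.starProjection b⟫_𝕜‖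
      ≤ ‖Tᗮ.starProjection a‖ * ‖Tᗮ.starProjection b‖ := norm_inner_le_norm _ _
    _ ≤ (δ * ‖a‖) * (δ * ‖b‖) :=
      mul_le_mul (h a ha) (h b hb) (norm_nonneg _) ((norm_nonneg _).trans (h a ha))
    _ = δ ^ 2 * (‖a‖ * ‖b‖) := by ring

end SubspaceGapLE

end Subspace

section LinearMap

variable {𝕜 V E F : Type*} [RCLike 𝕜] [SeminormedAddCommGroup V] [NormedSpace 𝕜 V]
  [NormedAddCommGroup E] [InnerProductSpace 𝕜 E] [NormedAddCommGroup F] [InnerProductSpace 𝕜 F]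
  {ε lam : ℝ}

/-- `ReducedMinModulusGE lam A` bounds below by `lam` the reduced minimum modulus of `A`, the
infimum of `‖A x‖ / dist(x, ker A)` over `x ∉ ker A`; for a matrix this is the smallest nonzero
singular value. It is encoded by preimages, the distance from `x` to `ker A` being the least norm
of a preimage of `A x` whenever that minimum is attained. -/
def ReducedMinModulusGE (lam : ℝ) (A : V →ₗ[𝕜] E) : Prop :=
  ∀ y ∈ A.range, ∃ x, A x = y ∧ lam * ‖x‖ ≤ ‖y‖

lemma reducedMinModulusGE_of_eigenbasis {ι : Type*} [Fintype ι] {A : E →ₗ[𝕜] E}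
    (v : OrthonormalBasis ι 𝕜 E) {μ : ι → 𝕜} (hμ : ∀ i, A (v i) = μ i • v i) (hlam : 0 ≤ lam)
    (hgap : ∀ i, μ i ≠ 0 → lam ≤ ‖μ i‖) : ReducedMinModulusGE lam A := by
  classical
  rintro _ ⟨z, rfl⟩
  let c (i : ι) : 𝕜 := if μ i = 0 then 0 else ⟪v i, z⟫_𝕜
  have hA (t : ι → 𝕜) : A (∑ i, t i • v i) = ∑ i, (t i * μ i) • v i := by
    simp only [map_sum, map_smul, hμ, smul_smul]
  have hnorm (t : ι → 𝕜) : ‖∑ i, t i • v i‖ ^ 2 = ∑ i, ‖t i‖ ^ 2 := by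
    simp only [← v.sum_sq_norm_inner_right, v.orthonormal.inner_right_fintype]
  have hc : A (∑ i, c i • v i) = A z := by
    conv_rhs => rw [← v.sum_repr' z]
    rw [hA, hA]
    refine Finset.sum_congr rfl fun i _ => ?_
    by_cases hi : μ i = 0 <;> simp [c, hi]
  refine ⟨∑ i, c i • v i, hc, le_of_sq_le_sq ?_ (norm_nonneg _)⟩
  rw [← hc, hA, mul_pow, hnorm, hnorm, Finset.mul_sum]
  refine Finset.sum_le_sum fun i _ => ?_
  rw [norm_mul, mul_pow, mul_comm]
  by_cases hi : μ i = 0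
  · simp [c, hi]
  · gcongr
    exact hgap i hi

lemma ReducedMinModulusGE.subspaceGapLE {A B : V →ₗ[𝕜] E} {S T : Submodule 𝕜 E}
    [T.HasOrthogonalProjection] (hA : ReducedMinModulusGE lam A) (hε : 0 ≤ ε) (hlam : 0 < lam)
    (hAB : ∀ x, ‖A x - B x‖ ≤ ε * ‖x‖) (hS : S ≤ A.range) (hT : B.range ≤ T) :
    SubspaceGapLE (ε / lam) S T := by
  intro y hy
  obtain ⟨x, rfl, hx⟩ := hA y (hS hy)
  calc ‖Tᗮ.starProjection (A x)‖
      ≤ ‖A x - B x‖ := norm_starProjection_orthogonal_le_norm_sub _ (hT ⟨x, rfl⟩)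
    _ ≤ ε * ‖x‖ := hAB x
    _ ≤ ε * (‖A x‖ / lam) := by gcongr; rwa [le_div_iff₀' hlam]
    _ = ε / lam * ‖A x‖ := by ring

variable [FiniteDimensional 𝕜 E] [FiniteDimensional 𝕜 F]

lemma inner_adjoint_adjoint_of_adjoint_comp_self {U : F →ₗ[𝕜] E}
    (hU : U.adjoint ∘ₗ U = LinearMap.id) (a b : E) :
    ⟪U.adjoint a, U.adjoint b⟫_𝕜 = ⟪U.range.starProjection a, b⟫_𝕜 := by
  have hproj : U.range.starProjection a = U (U.adjoint a) := by
    refine Submodule.eq_starProjection_of_mem_of_inner_eq_zero ⟨_, rfl⟩ ?_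
    rintro _ ⟨u, rfl⟩
    have hUU : U.adjoint (U (U.adjoint a)) = U.adjoint a := LinearMap.congr_fun hU _
    rw [← LinearMap.adjoint_inner_left, map_sub, hUU, sub_self, inner_zero_left]
  rw [hproj, LinearMap.adjoint_inner_right]

theorem norm_inner_sub_inner_adjoint_le {A B : V →ₗ[𝕜] E} {U : F →ₗ[𝕜] E} {T : Submodule 𝕜 E}
    (hε : 0 ≤ ε) (hlam : 0 < lam) (hA : ReducedMinModulusGE lam A)
    (hAB : ∀ x, ‖A x - B x‖ ≤ ε * ‖x‖) (hU : U.adjoint ∘ₗ U = LinearMap.id)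
    (hUA : U.range ≤ A.range) (hBT : B.range ≤ T) (hdim : finrank 𝕜 T ≤ finrank 𝕜 F) {a b : E}
    (ha : a ∈ T) (hb : b ∈ T) :
    ‖⟪a, b⟫_𝕜 - ⟪U.adjoint a, U.adjoint b⟫_𝕜‖ ≤ min 1 (ε / lam) ^ 2 * (‖a‖ * ‖b‖) := by
  have hUinv : Function.LeftInverse U.adjoint U := LinearMap.congr_fun hU
  have hgap : SubspaceGapLE (ε / lam) T U.range :=
    (hA.subspaceGapLE hε hlam hAB hUA hBT).symm (by positivity)
      (hdim.trans_eq (LinearMap.finrank_range_of_inj hUinv.injective).symm)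
  rw [inner_adjoint_adjoint_of_adjoint_comp_self hU]
  exact hgap.min_one.norm_inner_sub_inner_starProjection_le ha hb

end LinearMap

section Matrix

variable {𝕜 m n k : Type*} [RCLike 𝕜] [Fintype n] [DecidableEq n] {ε lam : ℝ}

lemma mem_range_toEuclideanLin {A : Matrix m n 𝕜} {x : EuclideanSpace 𝕜 m} :
    x ∈ A.toEuclideanLin.range ↔ ofLp x ∈ Set.range A.mulVec := by
  constructor
  · rintro ⟨z, rfl⟩
    exact ⟨ofLp z, rfl⟩
  · rintro ⟨z, hz⟩
    exact ⟨toLp 2 z, by rw [toLpLin_toLp, toLin'_apply, hz]⟩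

lemma reducedMinModulusGE_of_isHermitian {A : Matrix n n 𝕜} (hA : A.IsHermitian) (hlam : 0 ≤ lam)
    (hgap : ∀ i, hA.eigenvalues i ≠ 0 → lam ≤ |hA.eigenvalues i|) :
    ReducedMinModulusGE lam A.toEuclideanLin := by
  refine reducedMinModulusGE_of_eigenbasis hA.eigenvectorBasis
    (μ := fun i => (hA.eigenvalues i : 𝕜)) (fun i => ?_) hlam fun i hi => ?_
  · rw [toLpLin_apply, hA.mulVec_eigenvectorBasis, ← RCLike.real_smul_eq_coe_smul, toLp_smul]
  · rw [RCLike.norm_ofReal]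
    exact hgap i (by simpa using hi)

theorem stmt9_general [Fintype m] [Fintype k] [DecidableEq k] {A Ahat : Matrix m n 𝕜}
    {U Uhat : Matrix m k 𝕜} (hlam : 0 < lam) (hop : ‖A - Ahat‖ ≤ ε)
    (hA : ReducedMinModulusGE lam A.toEuclideanLin) (hU : Uᴴ * U = 1)
    (hUA : Set.range U.mulVec ⊆ Set.range A.mulVec)
    (hAhat : Set.range Ahat.mulVec ⊆ Set.range Uhat.mulVec) {a b : m → 𝕜}
    (ha : a ∈ Set.range Uhat.mulVec) (hb : b ∈ Set.range Uhat.mulVec) :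
    ‖star a ⬝ᵥ b - star (Uᴴ *ᵥ a) ⬝ᵥ (Uᴴ *ᵥ b)‖ ≤
      min 1 (ε / lam) ^ 2 * (‖toLp 2 a‖ * ‖toLp 2 b‖) := by
  classical
  have hAB (x : EuclideanSpace 𝕜 n) :
      ‖A.toEuclideanLin x - Ahat.toEuclideanLin x‖ ≤ ε * ‖x‖ := by
    rw [← LinearMap.sub_apply, ← map_sub]
    exact ((A - Ahat).l2_opNorm_mulVec x).trans (by gcongr)
  have hUadj : U.toEuclideanLin.adjoint ∘ₗ U.toEuclideanLin = LinearMap.id := by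
    rw [← toEuclideanLin_conjTranspose_eq_adjoint, ← toLpLin_mul_same, hU, toLpLin_one]
  have key := norm_inner_sub_inner_adjoint_le (a := toLp 2 a) (b := toLp 2 b)
    ((norm_nonneg _).trans hop) hlam hA hAB hUadj
    (fun _ hx => mem_range_toEuclideanLin.2 (hUA (mem_range_toEuclideanLin.1 hx)))
    (fun _ hx => mem_range_toEuclideanLin.2 (hAhat (mem_range_toEuclideanLin.1 hx)))
    Uhat.toEuclideanLin.finrank_range_le
    (mem_range_toEuclideanLin.2 ha) (mem_range_toEuclideanLin.2 hb)
  rw [← toEuclideanLin_conjTranspose_eq_adjoint] at key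
  rwa [dotProduct_comm, dotProduct_comm (star (Uᴴ *ᵥ a))]

end Matrix

lemma e2norm_eq_norm_toLp {n : ℕ} (v : Fin n → ℝ) : e2norm v = ‖toLp 2 v‖ := by
  simp only [e2norm, EuclideanSpace.norm_eq, Real.norm_eq_abs, sq_abs]

lemma e2norm_sq {n : ℕ} (v : Fin n → ℝ) : e2norm v ^ 2 = ∑ i, v i * v i := by
  rw [e2norm, Real.sq_sqrt (by positivity)]
  simp only [sq]

lemma l2_opNorm_le_of_e2norm_mulVec_le {d n : ℕ} {ε : ℝ} (hε : 0 ≤ ε)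
    {A : Matrix (Fin d) (Fin n) ℝ} (h : ∀ x, e2norm (A.mulVec x) ≤ ε * e2norm x) : ‖A‖ ≤ ε := by
  rw [l2_opNorm_def]
  refine ContinuousLinearMap.opNorm_le_bound _ hε fun x => ?_
  have hx := h (ofLp x)
  rwa [e2norm_eq_norm_toLp, e2norm_eq_norm_toLp] at hx

lemma min_one_sq_le {x : ℝ} (hx : 0 ≤ x) : min 1 x ^ 2 ≤ x :=
  (pow_le_of_le_one (by positivity) (min_le_left 1 x) two_ne_zero).trans (min_le_right 1 x)

/-- Wedin-type angle lemma: if `A, Â` are rank-`k` psd matrices with `‖A − Â‖_op ≤ ε`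
(i.e. `‖(A − Â)x‖ ≤ ε‖x‖` for all `x`), every nonzero eigenvalue of `A` is at least `λ`,
and `U, Û` have orthonormal columns spanning the ranges of `A, Â` respectively, then for
all unit vectors `a, b` in the column span of `Û`, `⟨Uᵀa, Uᵀb⟩ ≥ ⟨a,b⟩ − ε/λ`; in
particular `‖Uᵀa‖² ≥ 1 − ε/λ`. -/
theorem stmt9 (d k : ℕ) (ε lam : ℝ) (hε : 0 ≤ ε) (hlam : 0 < lam)
    (A Ahat : Matrix (Fin d) (Fin d) ℝ)
    (hA : A.PosSemidef) (hAhat : Ahat.PosSemidef)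
    (hrankA : A.rank = k) (hrankAhat : Ahat.rank = k)
    (hop : ∀ x : Fin d → ℝ, e2norm ((A - Ahat).mulVec x) ≤ ε * e2norm x)
    (heig : ∀ i, hA.isHermitian.eigenvalues i ≠ 0 → lam ≤ hA.isHermitian.eigenvalues i)
    (U Uhat : Matrix (Fin d) (Fin k) ℝ)
    (hU : U.transpose * U = 1) (hUhat : Uhat.transpose * Uhat = 1)
    (hUspan : Set.range U.mulVec = Set.range A.mulVec)
    (hUhatspan : Set.range Uhat.mulVec = Set.range Ahat.mulVec) :
    (∀ a b : Fin d → ℝ, e2norm a = 1 → e2norm b = 1 →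
      a ∈ Set.range Uhat.mulVec → b ∈ Set.range Uhat.mulVec →
      (∑ i, a i * b i) - ε / lam ≤ ∑ j, U.transpose.mulVec a j * U.transpose.mulVec b j) ∧
    (∀ a : Fin d → ℝ, e2norm a = 1 → a ∈ Set.range Uhat.mulVec →
      1 - ε / lam ≤ e2norm (U.transpose.mulVec a) ^ 2) := by
  have hA' : ReducedMinModulusGE lam A.toEuclideanLin :=
    reducedMinModulusGE_of_isHermitian hA.isHermitian hlam.le fun i hi =>
      (heig i hi).trans (le_abs_self _)
  have key (a b : Fin d → ℝ) (ha : e2norm a = 1) (hb : e2norm b = 1)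
      (har : a ∈ Set.range Uhat.mulVec) (hbr : b ∈ Set.range Uhat.mulVec) :
      (∑ i, a i * b i) - ε / lam ≤ ∑ j, U.transpose.mulVec a j * U.transpose.mulVec b j := by
    have hgen := stmt9_general hlam (l2_opNorm_le_of_e2norm_mulVec_le hε hop) hA' hU hUspan.le
      hUhatspan.ge har hbr
    have hbound : a ⬝ᵥ b - (Uᵀ *ᵥ a) ⬝ᵥ (Uᵀ *ᵥ b) ≤ min 1 (ε / lam) ^ 2 := by
      simpa [← e2norm_eq_norm_toLp, ha, hb] using (le_abs_self _).trans hgen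
    exact sub_le_comm.1 (hbound.trans (min_one_sq_le (div_nonneg hε hlam.le)))
  refine ⟨key, fun a ha har => ?_⟩
  simpa only [← e2norm_sq, ha, one_pow] using key a a ha ha har har
end

section
/- For every integer k ≥ 1 there exist positive reals σ₁,…,σ_k and σ'₁,…,σ'_k such that: (1) there is some i ∈ [k] with |σ_i − σ'_j| ≥ 1/(2√k) for every j ∈ [k]; (2) |σ_i − σ_j| > 1/2 and |σ'_i − σ'_j| > 1/2 for all i ≠ j; (3) σ_i ∈ [1/2, k+1] and σ'_i ∈ [1/2, k+1] for all i; and (4) ∑_{i=1}^k σ_i^{2ℓ} = ∑_{i=1}^k (σ'_i)^{2ℓ} for every ℓ = 1,…,k−1. Consequently the uniform mixtures (1/k)∑_{i=1}^k N(0,σ_i²) and (1/k)∑_{i=1}^k N(0,(σ'_i)²) have identical moments of every degree at most 2k−1. -/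
open MeasureTheory ProbabilityTheory

/-!
If the monic polynomials with roots `u` and `v` differ by a constant, then `u` and `v` have the same
elementary symmetric functions except the last one, hence by Newton's identities the same power sums
of degree below their number. Apply this in the variable `t²` to the half-integers `j + 1/2`,
`j < k`, and to solutions of `P y = P (3/4)`, where `P t = ∏ (t² - (j + 1/2)²)` is `halfIntegerProd`
up to sign. Like a cosine, `P` alternates in sign between consecutive half-integers, and its
oscillation grows away from the origin: `|P (t + 2)| ≥ |P t|` for `-1 ≤ t < k - 3/2`. So the level
`P (3/4)` is attained within `1/4` of every half-integer `j + 1/2`. Dilating by `(k + 1) / k` makes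
the separations strict and turns the gap `3/4 - 1/2` into `(k + 1) / (4 k)`, which is at least
`1 / (2 √k)` by AM-GM.
-/

section PowerSums

open Finset Polynomial

variable {R ι : Type*} [CommRing R] [Fintype ι] {u v : ι → R} {c : R} {n : ℕ}

lemma nodal_eq_nodal_add_C [IsDomain R] [Nonempty ι] (hv : Function.Injective v)
    (huv : ∀ i, ∏ j, (v i - u j) = c) :
    Lagrange.nodal univ u = Lagrange.nodal univ v + C c := by
  have hc : (C c).degree < (Lagrange.nodal univ v).degree := by
    rw [Lagrange.degree_nodal]
    exact degree_C_le.trans_lt (mod_cast Fintype.card_pos)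
  refine eq_of_degree_le_of_eval_index_eq univ hv.injOn Lagrange.degree_nodal.le ?_ ?_ fun i _ ↦ ?_
  · rw [degree_add_eq_left_of_degree_lt hc, Lagrange.degree_nodal, Lagrange.degree_nodal]
  · rw [leadingCoeff_add_of_degree_lt' hc, Lagrange.nodal_monic.leadingCoeff,
      Lagrange.nodal_monic.leadingCoeff]
  · rw [eval_add, eval_C, Lagrange.eval_nodal_at_node (mem_univ i), Lagrange.eval_nodal, huv i,
      zero_add]

lemma coeff_nodal_univ (u : ι → R) (hn : n ≤ Fintype.card ι) :
    (Lagrange.nodal univ u).coeff (Fintype.card ι - n) =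
      (-1) ^ n * MvPolynomial.aeval u (MvPolynomial.esymm ι R n) := by
  have h := Multiset.prod_X_sub_C_coeff (univ.val.map u) (k := Fintype.card ι - n) (by simp)
  rw [Multiset.map_map, Multiset.card_map, card_val, card_univ, Nat.sub_sub_self hn] at h
  rw [MvPolynomial.aeval_esymm_eq_multiset_esymm]
  exact h

lemma aeval_esymm_eq_of_nodal_eq_nodal_add_C
    (huv : Lagrange.nodal univ u = Lagrange.nodal univ v + C c) (hn : n < Fintype.card ι) :
    MvPolynomial.aeval u (MvPolynomial.esymm ι R n) =
      MvPolynomial.aeval v (MvPolynomial.esymm ι R n) := by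
  have h := congrArg (coeff · (Fintype.card ι - n)) huv
  simp only [coeff_add, coeff_C_of_ne_zero (Nat.sub_ne_zero_of_lt hn), add_zero,
    coeff_nodal_univ _ hn.le] at h
  exact (isUnit_one.neg.pow n).mul_left_cancel h

lemma aeval_psum_eq_of_aeval_esymm_eq
    (huv : ∀ m ≤ n, MvPolynomial.aeval u (MvPolynomial.esymm ι R m) =
      MvPolynomial.aeval v (MvPolynomial.esymm ι R m)) :
    MvPolynomial.aeval u (MvPolynomial.psum ι R n) =
      MvPolynomial.aeval v (MvPolynomial.psum ι R n) := by
  induction n using Nat.strong_induction_on with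
  | _ n ih =>
    rcases n.eq_zero_or_pos with rfl | hn
    · simp only [MvPolynomial.psum_zero, map_natCast]
    rw [MvPolynomial.psum_eq_mul_esymm_sub_sum _ _ n hn]
    simp only [map_sub, map_mul, map_pow, map_neg, map_one, map_natCast, map_sum]
    rw [huv n le_rfl]
    congr 1
    refine sum_congr rfl fun a ha ↦ ?_
    simp only [mem_filter, HasAntidiagonal.mem_antidiagonal, Set.mem_Ioo] at ha
    rw [huv a.1 (by lia), ih a.2 (by lia) fun m hm ↦ huv m (by lia)]

lemma sum_pow_eq_sum_pow_of_prod_sub_eq [IsDomain R] (hv : Function.Injective v)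
    (huv : ∀ i, ∏ j, (v i - u j) = c) (hn : n < Fintype.card ι) :
    ∑ i, u i ^ n = ∑ i, v i ^ n := by
  have : Nonempty ι := Fintype.card_pos_iff.mp (by lia)
  have hpsum := aeval_psum_eq_of_aeval_esymm_eq fun m (hm : m ≤ n) ↦
    aeval_esymm_eq_of_nodal_eq_nodal_add_C (nodal_eq_nodal_add_C hv huv) (hm.trans_lt hn)
  simpa only [MvPolynomial.psum, map_sum, map_pow, MvPolynomial.aeval_X] using hpsum

end PowerSums

section GaussianMoments

lemma integrable_pow_gaussianReal (μ : ℝ) (v : NNReal) (s : ℕ) :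
    Integrable (· ^ s) (gaussianReal μ v) := by
  have h := (memLp_id_gaussianReal' (μ := μ) (v := v) s (by simp)).integrable_norm_pow'
  refine h.mono (by fun_prop) (ae_of_all _ fun z ↦ ?_)
  simp

lemma integral_pow_gaussianReal_zero_sq (σ : ℝ) (s : ℕ) :
    ∫ z, z ^ s ∂gaussianReal 0 (.mk (σ ^ 2) (sq_nonneg σ)) =
      σ ^ s * ∫ z, z ^ s ∂gaussianReal 0 1 := by
  have hmap : (gaussianReal 0 1).map (σ * ·) = gaussianReal 0 (.mk (σ ^ 2) (sq_nonneg σ)) := by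
    simpa only [mul_zero, mul_one] using gaussianReal_map_const_mul (μ := 0) (v := 1) σ
  rw [← hmap, integral_map (by fun_prop) (by fun_prop), ← integral_const_mul]
  simp only [mul_pow]

lemma integral_pow_gaussianReal_zero_of_odd (v : NNReal) {s : ℕ} (hs : Odd s) :
    ∫ z, z ^ s ∂gaussianReal 0 v = 0 := by
  have hmap : (gaussianReal 0 v).map (- ·) = gaussianReal 0 v := by
    simpa only [neg_zero] using gaussianReal_map_neg (μ := 0) (v := v)
  have hneg : ∫ z, z ^ s ∂gaussianReal 0 v = -∫ z, z ^ s ∂gaussianReal 0 v := by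
    conv_lhs => rw [← hmap]
    rw [integral_map (by fun_prop) (by fun_prop), ← integral_neg]
    simp only [hs.neg_pow]
  exact self_eq_neg.mp hneg

variable {ι : Type*} [Fintype ι] {w : ENNReal} {s : ℕ}

lemma integral_pow_sum_smul_gaussianReal (hw : w ≠ ⊤) (σ : ι → ℝ) (s : ℕ) :
    ∫ z, z ^ s ∂(∑ i, w • gaussianReal 0 (.mk (σ i ^ 2) (sq_nonneg (σ i)))) =
      w.toReal * ((∑ i, σ i ^ s) * ∫ z, z ^ s ∂gaussianReal 0 1) := by
  rw [integral_finsetSum_measure fun i _ ↦ (integrable_pow_gaussianReal 0 _ s).smul_measure hw]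
  simp only [integral_smul_measure, integral_pow_gaussianReal_zero_sq, smul_eq_mul, Finset.sum_mul,
    Finset.mul_sum]

lemma integral_pow_sum_smul_gaussianReal_congr (hw : w ≠ ⊤) {σ σ' : ι → ℝ}
    (h : Even s → ∑ i, σ i ^ s = ∑ i, σ' i ^ s) :
    ∫ z, z ^ s ∂(∑ i, w • gaussianReal 0 (.mk (σ i ^ 2) (sq_nonneg (σ i)))) =
      ∫ z, z ^ s ∂(∑ i, w • gaussianReal 0 (.mk (σ' i ^ 2) (sq_nonneg (σ' i)))) := by
  rw [integral_pow_sum_smul_gaussianReal hw, integral_pow_sum_smul_gaussianReal hw]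
  rcases s.even_or_odd with hs | hs
  · rw [h hs]
  · simp only [integral_pow_gaussianReal_zero_of_odd 1 hs, mul_zero]

end GaussianMoments

section HalfIntegerProd

/-- The even polynomial with zeros `±1/2, …, ±(k - 1/2)`, signed so as to be positive at the origin.
Up to a constant factor it is a partial product of Euler's product for `cos (π t)`. -/
noncomputable def halfIntegerProd (k : ℕ) (t : ℝ) : ℝ :=
  ∏ j ∈ Finset.range k, (((j : ℝ) + 1 / 2) ^ 2 - t ^ 2)

variable {k i m : ℕ} {t : ℝ}

lemma continuous_halfIntegerProd (k : ℕ) : Continuous (halfIntegerProd k) := by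
  unfold halfIntegerProd
  fun_prop

lemma halfIntegerProd_neg (k : ℕ) (t : ℝ) : halfIntegerProd k (-t) = halfIntegerProd k t := by
  simp only [halfIntegerProd, neg_sq]

lemma halfIntegerProd_add_half (hi : i < k) : halfIntegerProd k (i + 1 / 2) = 0 :=
  Finset.prod_eq_zero (Finset.mem_range.mpr hi) (sub_self _)

lemma prod_sq_sub_half_integer_sq (k : ℕ) (t : ℝ) :
    ∏ j : Fin k, (t ^ 2 - ((j : ℝ) + 1 / 2) ^ 2) = (-1) ^ k * halfIntegerProd k t := by
  calc ∏ j : Fin k, (t ^ 2 - ((j : ℝ) + 1 / 2) ^ 2)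
      = ∏ j : Fin k, -(((j : ℝ) + 1 / 2) ^ 2 - t ^ 2) := by simp only [neg_sub]
    _ = (-1) ^ k * halfIntegerProd k t := by
      rw [Finset.prod_neg, Finset.card_univ, Fintype.card_fin, halfIntegerProd, Finset.prod_range]

lemma halfIntegerProd_nonpos (hk : 0 < k) (ht : t ∈ Set.Icc (1 / 2) (3 / 2)) :
    halfIntegerProd k t ≤ 0 := by
  obtain ⟨n, rfl⟩ := Nat.exists_eq_add_one.mpr hk
  obtain ⟨ht₁, ht₂⟩ := ht
  rw [halfIntegerProd, Finset.prod_range_succ']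
  refine mul_nonpos_of_nonneg_of_nonpos (Finset.prod_nonneg fun j _ ↦ ?_) ?_
  · have hj : t ≤ ((j + 1 : ℕ) : ℝ) + 1 / 2 := by
      push_cast
      linarith [j.cast_nonneg (α := ℝ)]
    exact sub_nonneg.mpr (pow_le_pow_left₀ (by linarith) hj 2)
  · rw [Nat.cast_zero, zero_add]
    exact sub_nonpos.mpr (pow_le_pow_left₀ (by norm_num) ht₁ 2)

lemma halfIntegerProd_add_one (k : ℕ) (t : ℝ) :
    (t - k + 1 / 2) * halfIntegerProd k (t + 1) = (t + k + 1 / 2) * halfIntegerProd k t := by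
  induction k with
  | zero => simp [halfIntegerProd]
  | succ k ih =>
    simp only [halfIntegerProd, Finset.prod_range_succ] at ih ⊢
    push_cast
    linear_combination -(t - k - 1 / 2) * (t + k + 3 / 2) * ih

lemma halfIntegerProd_add_two (k : ℕ) (t : ℝ) :
    (k - t - 1 / 2) * (k - t - 3 / 2) * halfIntegerProd k (t + 2) =
      (k + t + 1 / 2) * (k + t + 3 / 2) * halfIntegerProd k t := by
  have h₁ := halfIntegerProd_add_one k t
  have h₂ := halfIntegerProd_add_one k (t + 1)
  rw [show t + 1 + 1 = t + 2 by ring] at h₂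
  linear_combination (t - k + 1 / 2) * h₂ + (t + k + 3 / 2) * h₁

lemma halfIntegerProd_add_two_le (ht : -1 ≤ t) (htk : t + 3 / 2 < k)
    (h : halfIntegerProd k t ≤ 0) : halfIntegerProd k (t + 2) ≤ halfIntegerProd k t := by
  have hpos : 0 < (k - t - 1 / 2) * (k - t - 3 / 2) := mul_pos (by linarith) (by linarith)
  have hle : (k - t - 1 / 2) * (k - t - 3 / 2) ≤ (k + t + 1 / 2) * (k + t + 3 / 2) := by
    linear_combination 4 * (k : ℝ) * ht
  refine le_of_mul_le_mul_left ?_ hpos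
  rw [halfIntegerProd_add_two]
  exact mul_le_mul_of_nonpos_right hle h

lemma halfIntegerProd_add_two_mul_le (ht : -1 ≤ t) (h : halfIntegerProd k t ≤ 0)
    (hm : t + 2 * m < k + 1 / 2) : halfIntegerProd k (t + 2 * m) ≤ halfIntegerProd k t := by
  induction m with
  | zero => simp
  | succ m ih =>
    push_cast at hm ⊢
    have hle : halfIntegerProd k (t + 2 * m) ≤ halfIntegerProd k t := ih (by linarith)
    rw [show t + 2 * ((m : ℝ) + 1) = t + 2 * m + 2 by ring]
    refine (halfIntegerProd_add_two_le ?_ ?_ (hle.trans h)).trans hle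
    · linarith [m.cast_nonneg (α := ℝ)]
    · linarith

-- The witness is `i + 3/4` or `i + 1/4`, reached in steps of two from `3/4` or `-3/4`.
lemma exists_halfIntegerProd_le_level (hi : i < k) :
    ∃ p : ℝ, |p - (i + 1 / 2)| ≤ 1 / 4 ∧ halfIntegerProd k p ≤ halfIntegerProd k (3 / 4) := by
  have hlevel : halfIntegerProd k (3 / 4) ≤ 0 := halfIntegerProd_nonpos (by lia) (by norm_num)
  have hik : (i : ℝ) + 1 ≤ k := mod_cast hi
  rcases i.even_or_odd' with ⟨m, rfl | rfl⟩ <;> push_cast at hik ⊢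
  · refine ⟨3 / 4 + 2 * m, ?_, halfIntegerProd_add_two_mul_le (by norm_num) hlevel (by linarith)⟩
    rw [abs_le]
    constructor <;> linarith
  · rw [← halfIntegerProd_neg] at hlevel ⊢
    refine ⟨-(3 / 4) + 2 * (m + 1 : ℕ), ?_,
      halfIntegerProd_add_two_mul_le (by norm_num) hlevel (by push_cast; linarith)⟩
    rw [abs_le]
    constructor <;> push_cast <;> linarith

lemma exists_halfIntegerProd_eq_level (hi : i < k) :
    ∃ y : ℝ, 3 / 4 ≤ y ∧ |y - (i + 1 / 2)| ≤ 1 / 4 ∧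
      halfIntegerProd k y = halfIntegerProd k (3 / 4) := by
  rcases i.eq_zero_or_pos with rfl | hi₀
  · exact ⟨3 / 4, le_rfl, by norm_num [abs_le], rfl⟩
  obtain ⟨p, hp, hple⟩ := exists_halfIntegerProd_le_level hi
  have hlevel : halfIntegerProd k (3 / 4) ∈
      Set.uIcc (halfIntegerProd k p) (halfIntegerProd k (i + 1 / 2)) := by
    rw [halfIntegerProd_add_half hi]
    exact Set.mem_uIcc_of_le hple (halfIntegerProd_nonpos (by lia) (by norm_num))
  obtain ⟨y, hy, hylevel⟩ :=
    intermediate_value_uIcc (continuous_halfIntegerProd k).continuousOn hlevel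
  have hyi : |y - (i + 1 / 2)| ≤ 1 / 4 := by
    rw [abs_sub_comm] at hp ⊢
    exact (Set.abs_sub_right_of_mem_uIcc hy).trans hp
  have hi₁ : (1 : ℝ) ≤ i := mod_cast hi₀
  exact ⟨y, by linarith [(abs_le.mp hyi).1], hyi, hylevel⟩

end HalfIntegerProd

lemma one_sub_two_mul_le_abs_sub {x y a δ : ℝ} {m n : ℕ} (hmn : m ≠ n)
    (hx : |x - (m + a)| ≤ δ) (hy : |y - (n + a)| ≤ δ) : 1 - 2 * δ ≤ |x - y| := by
  have hone : (1 : ℝ) ≤ |(m : ℝ) - n| := by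
    exact_mod_cast Int.one_le_abs (sub_ne_zero.mpr (Nat.cast_injective.ne hmn))
  rw [abs_le] at hx hy
  rw [le_abs]
  rcases le_abs.mp hone with h | h
  · left; linarith
  · right; linarith

lemma exists_near_half_integers_sum_pow_eq (k : ℕ) :
    ∃ y : Fin k → ℝ, (∀ i, 3 / 4 ≤ y i) ∧ (∀ i, |y i - ((i : ℕ) + 1 / 2)| ≤ 1 / 4) ∧
      ∀ ℓ < k, ∑ i : Fin k, ((i : ℝ) + 1 / 2) ^ (2 * ℓ) = ∑ i, y i ^ (2 * ℓ) := by
  choose y hylow hynear hylevel using fun i : Fin k ↦ exists_halfIntegerProd_eq_level i.isLt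
  refine ⟨y, hylow, hynear, fun ℓ hℓ ↦ ?_⟩
  have hinj : Function.Injective fun i ↦ y i ^ 2 := by
    intro i j hij
    by_contra hne
    have hsep := one_sub_two_mul_le_abs_sub (Fin.val_ne_of_ne hne) (hynear i) (hynear j)
    have hyij : y i = y j :=
      (pow_left_inj₀ (by linarith [hylow i]) (by linarith [hylow j]) two_ne_zero).mp hij
    norm_num [hyij] at hsep
  have hprod (i : Fin k) : ∏ j : Fin k, (y i ^ 2 - ((j : ℝ) + 1 / 2) ^ 2) =
      (-1) ^ k * halfIntegerProd k (3 / 4) := by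
    rw [prod_sq_sub_half_integer_sq, hylevel]
  simpa only [pow_mul] using sum_pow_eq_sum_pow_of_prod_sub_eq hinj hprod (by simpa using hℓ)

lemma one_div_two_mul_sqrt_le {x : ℝ} (hx : 0 < x) : 1 / (2 * √x) ≤ (x + 1) / (4 * x) := by
  have amgm : 2 * √x ≤ x + 1 := by
    simpa only [mul_one, one_pow, Real.sq_sqrt hx.le] using two_mul_le_add_sq (√x) 1
  calc 1 / (2 * √x) = 2 * √x / (4 * √x ^ 2) := by field_simp; norm_num
    _ = 2 * √x / (4 * x) := by rw [Real.sq_sqrt hx.le]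
    _ ≤ (x + 1) / (4 * x) := by gcongr

lemma mul_le_abs_mul_sub_mul {s d x y : ℝ} (hs : 0 ≤ s) (h : d ≤ |x - y|) :
    s * d ≤ |s * x - s * y| := by
  rw [← mul_sub, abs_mul, abs_of_nonneg hs]
  exact mul_le_mul_of_nonneg_left h hs

section Dilation

variable {k x y : ℝ}

lemma dilate_mem_Icc (hk : 0 < k) (hx : 1 / 2 ≤ x) (hxk : x ≤ k) :
    (k + 1) / k * x ∈ Set.Icc (1 / 2) (k + 1) := by
  have hs : 1 ≤ (k + 1) / k := (one_le_div hk).mpr (by linarith)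
  constructor
  · exact hx.trans (le_mul_of_one_le_left (by linarith) hs)
  · calc (k + 1) / k * x ≤ (k + 1) / k * k := by gcongr
      _ = k + 1 := div_mul_cancel₀ _ hk.ne'

lemma lt_abs_dilate_sub_dilate {d : ℝ} (hk : 0 < k) (hd : 0 < d) (hxy : d ≤ |x - y|) :
    d < |(k + 1) / k * x - (k + 1) / k * y| := by
  have hs : 1 < (k + 1) / k := (one_lt_div hk).mpr (by linarith)
  exact (lt_mul_of_one_lt_left hd hs).trans_le (mul_le_abs_mul_sub_mul (by positivity) hxy)

end Dilation

theorem stmt12_general (k : ℕ) (hk : 1 ≤ k) :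
    ∃ σ σ' : Fin k → ℝ,
      (∀ i, 0 < σ i) ∧ (∀ i, 0 < σ' i) ∧
      (∃ i, ∀ j, ((k : ℝ) + 1) / (4 * k) ≤ |σ i - σ' j|) ∧
      (∀ i j, i ≠ j → 1 / 2 < |σ i - σ j|) ∧
      (∀ i j, i ≠ j → 1 / 2 < |σ' i - σ' j|) ∧
      (∀ i, σ i ∈ Set.Icc (1 / 2 : ℝ) ((k : ℝ) + 1)) ∧
      (∀ i, σ' i ∈ Set.Icc (1 / 2 : ℝ) ((k : ℝ) + 1)) ∧
      (∀ ℓ : ℕ, 1 ≤ ℓ → ℓ ≤ k - 1 → (∑ i, σ i ^ (2 * ℓ)) = ∑ i, σ' i ^ (2 * ℓ)) ∧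
      (∀ s : ℕ, s ≤ 2 * k - 1 →
        (∫ z : ℝ, z ^ s
            ∂(∑ i : Fin k, (k : ENNReal)⁻¹ • gaussianReal 0 ⟨σ i ^ 2, sq_nonneg (σ i)⟩))
          = ∫ z : ℝ, z ^ s
            ∂(∑ i : Fin k, (k : ENNReal)⁻¹ • gaussianReal 0 ⟨σ' i ^ 2, sq_nonneg (σ' i)⟩)) := by
  have hk₀ : (0 : ℝ) < k := mod_cast hk
  obtain ⟨y, hylow, hynear, hysum⟩ := exists_near_half_integers_sum_pow_eq k
  let s : ℝ := (k + 1) / k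
  have hik (i : Fin k) : (i : ℝ) + 1 ≤ k := mod_cast i.isLt
  have hσ (i : Fin k) : s * ((i : ℝ) + 1 / 2) ∈ Set.Icc (1 / 2 : ℝ) (k + 1) :=
    dilate_mem_Icc hk₀ (by linarith [(i : ℕ).cast_nonneg (α := ℝ)]) (by linarith [hik i])
  have hσ' (i : Fin k) : s * y i ∈ Set.Icc (1 / 2 : ℝ) (k + 1) :=
    dilate_mem_Icc hk₀ (by linarith [hylow i]) (by linarith [hik i, (abs_le.mp (hynear i)).2])
  have hgap (j : Fin k) : 1 / 4 ≤ |((0 : ℕ) : ℝ) + 1 / 2 - y j| := by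
    rw [le_abs', Nat.cast_zero]
    exact .inl (by linarith [hylow j])
  have hsum (ℓ : ℕ) (hℓ : ℓ < k) :
      ∑ i : Fin k, (s * ((i : ℝ) + 1 / 2)) ^ (2 * ℓ) = ∑ i, (s * y i) ^ (2 * ℓ) := by
    simp only [mul_pow, ← Finset.mul_sum, hysum ℓ hℓ]
  refine ⟨fun i ↦ s * (i + 1 / 2), fun i ↦ s * y i, fun i ↦ one_half_pos.trans_le (hσ i).1,
    fun i ↦ one_half_pos.trans_le (hσ' i).1, ⟨⟨0, hk⟩, fun j ↦ ?_⟩,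
    fun i j hij ↦ lt_abs_dilate_sub_dilate hk₀ one_half_pos ?_,
    fun i j hij ↦ lt_abs_dilate_sub_dilate hk₀ one_half_pos ?_,
    hσ, hσ', fun ℓ _ hℓ ↦ hsum ℓ (by lia), fun n hn ↦ ?_⟩
  · calc ((k : ℝ) + 1) / (4 * k) = s * (1 / 4) := by simp only [s]; field_simp
      _ ≤ _ := mul_le_abs_mul_sub_mul (by positivity) (hgap j)
  · have hsep : 1 - 2 * 0 ≤ |((i : ℝ) + 1 / 2) - (j + 1 / 2)| :=
      one_sub_two_mul_le_abs_sub (a := 1 / 2) (Fin.val_ne_of_ne hij) (by simp) (by simp)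
    linarith
  · linarith [one_sub_two_mul_le_abs_sub (Fin.val_ne_of_ne hij) (hynear i) (hynear j)]
  · refine integral_pow_sum_smul_gaussianReal_congr (by simp; lia) fun heven ↦ ?_
    obtain ⟨ℓ, rfl⟩ := even_iff_exists_two_mul.mp heven
    exact hsum ℓ (by lia)

/-- Moment-matching construction: for every `k ≥ 1` there are standard deviations
`σ, σ'` with (1) some `σ_i` at distance at least `1/(2√k)` from every `σ'_j`;
(2) pairwise separation `> 1/2` within each family; (3) all values in `[1/2, k+1]`;
(4) matching power sums `∑ σᵢ^(2ℓ) = ∑ (σ'ᵢ)^(2ℓ)` for `1 ≤ ℓ ≤ k−1`; and consequently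
the two uniform Gaussian mixtures agree on all moments of degree at most `2k−1`. -/
theorem stmt12 (k : ℕ) (hk : 1 ≤ k) :
    ∃ σ σ' : Fin k → ℝ,
      (∀ i, 0 < σ i) ∧ (∀ i, 0 < σ' i) ∧
      (∃ i, ∀ j, 1 / (2 * Real.sqrt k) ≤ |σ i - σ' j|) ∧
      (∀ i j, i ≠ j → 1 / 2 < |σ i - σ j|) ∧
      (∀ i j, i ≠ j → 1 / 2 < |σ' i - σ' j|) ∧
      (∀ i, σ i ∈ Set.Icc (1 / 2 : ℝ) ((k : ℝ) + 1)) ∧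
      (∀ i, σ' i ∈ Set.Icc (1 / 2 : ℝ) ((k : ℝ) + 1)) ∧
      (∀ ℓ : ℕ, 1 ≤ ℓ → ℓ ≤ k - 1 → (∑ i, σ i ^ (2 * ℓ)) = ∑ i, σ' i ^ (2 * ℓ)) ∧
      (∀ s : ℕ, s ≤ 2 * k - 1 →
        (∫ z : ℝ, z ^ s
            ∂(∑ i : Fin k, (k : ENNReal)⁻¹ • gaussianReal 0 ⟨σ i ^ 2, sq_nonneg (σ i)⟩))
          = ∫ z : ℝ, z ^ s
            ∂(∑ i : Fin k, (k : ENNReal)⁻¹ • gaussianReal 0 ⟨σ' i ^ 2, sq_nonneg (σ' i)⟩)) := by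
  obtain ⟨σ, σ', hσ, hσ', ⟨i, hgap⟩, hrest⟩ := stmt12_general k hk
  exact ⟨σ, σ', hσ, hσ', ⟨i, fun j ↦ (one_div_two_mul_sqrt_le (mod_cast hk)).trans (hgap j)⟩,
    hrest⟩
end
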